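/- arXiv:math/0405171 — 3 statements merged into one kernel-verified Lean document; each statement's English description precedes it below -/
import Mathlib

section
/- (Cilleruelo.) For every ε > 0 and every integer k there exists a positive integer n such that the circle x² + y² = n contains more than k lattice points, and every lattice point u ∈ ℤ² with |u|² = n satisfies |θ_u − t·π/2| < ε modulo 2π for some t ∈ {0,1,2,3}; that is, all lattice points of the circle lie on the four arcs of angular half-width ε centered at the half-axis directions. -/
/-- The set of lattice points `(x, y) ∈ ℤ²` with `x² + y² = n`. -/
noncomputable def latticeCircle (n : ℕ) : Finset (ℤ × ℤ) :=
  (Finset.Icc (-(n : ℤ)) (n : ℤ) ×ˢ Finset.Icc (-(n : ℤ)) (n : ℤ)).filter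
    (fun p => p.1 ^ 2 + p.2 ^ 2 = (n : ℤ))

/-- `r n` is the number of lattice points on the circle of squared radius `n`. -/
noncomputable def latticeR (n : ℕ) : ℕ := (latticeCircle n).card

/-- The angle `θ_u ∈ [0, 2π)` of a lattice point `u`. -/
noncomputable def latticeTheta (u : ℤ × ℤ) : ℝ :=
  if 0 ≤ Complex.arg ((u.1 : ℂ) + (u.2 : ℂ) * Complex.I)
  then Complex.arg ((u.1 : ℂ) + (u.2 : ℂ) * Complex.I)
  else Complex.arg ((u.1 : ℂ) + (u.2 : ℂ) * Complex.I) + 2 * Real.pi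

section
open Complex

noncomputable def gA (z : GaussianInt) : ℝ := ‖(z : ℂ)‖

noncomputable def gChi (z : GaussianInt) : ℂ := ((z : ℂ) / (gA z : ℂ)) ^ 4

noncomputable def gF (m : ℕ) (z : GaussianInt) (s : ℂ) : ℂ := gChi z ^ m * (gA z : ℂ) ^ (-s)

noncomputable def gL (m : ℕ) (s : ℂ) : ℂ := ∑' z : GaussianInt, gF m z s

lemma gA_nonneg (z : GaussianInt) : 0 ≤ gA z := norm_nonneg _

lemma gA_mul (z w : GaussianInt) : gA (z * w) = gA z * gA w := by
  simp [gA]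

lemma gA_zero : gA 0 = 0 := by simp [gA]

lemma gA_one : gA 1 = 1 := by simp [gA]

lemma gA_sq (z : GaussianInt) : gA z ^ 2 = ((z.re ^ 2 + z.im ^ 2 : ℤ) : ℝ) := by
  rw [gA, ← Complex.normSq_eq_norm_sq, Complex.normSq_apply]
  push_cast
  simp; ring

lemma gA_pos {z : GaussianInt} (hz : z ≠ 0) : 0 < gA z := by
  rw [gA, norm_pos_iff]
  simpa using hz

lemma gA_one_le {z : GaussianInt} (hz : z ≠ 0) : 1 ≤ gA z := by
  have h := gA_pos hz
  have h2 : (0:ℝ) < ((z.re ^ 2 + z.im ^ 2 : ℤ) : ℝ) := by rw [← gA_sq]; positivity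
  have h3 : (1:ℤ) ≤ z.re ^ 2 + z.im ^ 2 := by exact_mod_cast h2
  have h4 : (1:ℝ) ≤ gA z ^ 2 := by rw [gA_sq]; exact_mod_cast h3
  nlinarith

lemma gChi_mul (z w : GaussianInt) : gChi (z * w) = gChi z * gChi w := by
  simp only [gChi, gA_mul, ← mul_pow]
  congr 1
  push_cast
  rw [map_mul]
  exact (mul_div_mul_comm _ _ _ _)

lemma norm_gChi {z : GaussianInt} (hz : z ≠ 0) : ‖gChi z‖ = 1 := by
  have := gA_pos hz
  rw [gChi, norm_pow, norm_div, Complex.norm_real, Real.norm_of_nonneg this.le]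
  change (gA z / gA z) ^ 4 = 1
  rw [div_self this.ne', one_pow]

lemma gChi_zero : gChi 0 = 0 := by simp [gChi]

lemma gChi_one : gChi 1 = 1 := by simp [gChi, gA_one]

lemma gF_mul (m : ℕ) (z w : GaussianInt) (s : ℂ) : gF m (z * w) s = gF m z s * gF m w s := by
  simp only [gF, gChi_mul, gA_mul, mul_pow]
  push_cast
  rw [Complex.mul_cpow_ofReal_nonneg (gA_nonneg _) (gA_nonneg _)]
  ring

lemma gF_zero (m : ℕ) {s : ℂ} (hs : s ≠ 0) : gF m 0 s = 0 := by
  simp [gF, gA_zero, hs]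

lemma norm_gF {m : ℕ} {z : GaussianInt} (hz : z ≠ 0) (s : ℂ) : ‖gF m z s‖ = gA z ^ (-s.re) := by
  rw [gF, norm_mul, norm_pow, norm_gChi hz, one_pow, one_mul,
    Complex.norm_cpow_eq_rpow_re_of_pos (gA_pos hz)]
  simp

lemma gA_rpow_zero {r : ℝ} (hr : r ≠ 0) : gA 0 ^ (-r) = 0 := by
  rw [gA_zero, Real.zero_rpow (by simpa using hr)]

lemma norm_gF' (m : ℕ) (z : GaussianInt) {s : ℂ} (hs : 0 < s.re) : ‖gF m z s‖ = gA z ^ (-s.re) := by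
  rcases eq_or_ne z 0 with rfl | hz
  · rw [gF_zero, gA_rpow_zero hs.ne', norm_zero]
    rintro rfl; simp at hs
  · exact norm_gF hz s

def gEquiv : GaussianInt ≃ (Fin 2 → ℤ) where
  toFun z := ![z.re, z.im]
  invFun v := ⟨v 0, v 1⟩
  left_inv z := by simp
  right_inv v := by ext i; fin_cases i <;> simp

lemma summable_gA {r : ℝ} (hr : 2 < r) : Summable fun z : GaussianInt => gA z ^ (-r) := by
  have h := (gEquiv.summable_iff).2 (EisensteinSeries.summable_one_div_norm_rpow hr)
  refine Summable.of_nonneg_of_le (fun z => Real.rpow_nonneg (gA_nonneg _) _) (fun z => ?_) h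
  rcases eq_or_ne z 0 with rfl | hz
  · rw [gA_rpow_zero (by linarith)]; simp only [Function.comp]; positivity
  · have h0 : gEquiv z ≠ 0 := by
      intro h0
      apply hz
      apply gEquiv.injective
      rw [h0]; ext i; fin_cases i <;> simp [gEquiv]
    apply Real.rpow_le_rpow_of_nonpos (norm_pos_iff.2 h0) _ (by linarith)
    rw [pi_norm_le_iff_of_nonneg (gA_nonneg _)]
    intro i
    have h1 := gA_sq z
    have h2 := gA_nonneg z
    push_cast at h1
    fin_cases i
    · simp only [gEquiv, Equiv.coe_fn_mk, Fin.zero_eta, Matrix.cons_val_zero, Int.norm_eq_abs]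
      apply abs_le_of_sq_le_sq _ h2
      nlinarith [sq_nonneg (z.im : ℝ)]
    · simp only [gEquiv, Equiv.coe_fn_mk, Fin.mk_one, Matrix.cons_val_one, Int.norm_eq_abs]
      apply abs_le_of_sq_le_sq _ h2
      change (z.im : ℝ) ^ 2 ≤ _
      nlinarith [sq_nonneg (z.re : ℝ)]

lemma not_summable_gA : ¬ Summable fun z : GaussianInt => gA z ^ (-2 : ℝ) := by
  intro h
  -- inject pairs (a, b) with b < a + 1
  let e : (Σ a : ℕ, Fin (a + 1)) → GaussianInt := fun p => ⟨(p.1 : ℤ) + 1, (p.2 : ℕ)⟩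
  have he : Function.Injective e := by
    rintro ⟨a, b⟩ ⟨c, d⟩ h
    simp only [e, Zsqrtd.mk.injEq] at h
    obtain ⟨h1, h2⟩ := h
    have : a = c := by omega
    subst this
    simp only [Sigma.mk.injEq, heq_eq_eq, true_and]
    exact Fin.ext (by exact_mod_cast h2)
  have h2 := (h.comp_injective he).sigma
  have h3 : Summable fun a : ℕ => (1 / 2 : ℝ) * (1 / ((a + 1 : ℕ) : ℝ)) := by
    refine Summable.of_nonneg_of_le (fun a => by positivity) (fun a => ?_) h2
    rw [tsum_fintype]
    have : ∀ b : Fin (a + 1), (1 / 2 : ℝ) / ((a : ℝ) + 1) ^ 2 ≤ gA (e ⟨a, b⟩) ^ (-2 : ℝ) := by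
      intro b
      have hb : ((b : ℕ) : ℝ) ≤ a := by exact_mod_cast Nat.lt_succ_iff.1 b.2
      rw [Real.rpow_neg (gA_nonneg _), show (2:ℝ) = ((2:ℕ):ℝ) by norm_num, Real.rpow_natCast, gA_sq]
      simp only [e]
      push_cast
      rw [div_div, ← one_div]
      have hb0 : (0:ℝ) ≤ (b:ℕ) := by positivity
      have ha0 : (0:ℝ) ≤ a := by positivity
      apply one_div_le_one_div_of_le (by positivity)
      nlinarith
    refine le_trans ?_ (Finset.sum_le_sum (fun b _ => this b))
    simp
    field_simp
    rfl
  have h4 := (summable_mul_left_iff (by norm_num)).1 h3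
  exact Real.not_summable_one_div_natCast ((summable_nat_add_iff 1).1 h4)

lemma summable_gF (m : ℕ) {s : ℂ} (hs : 2 < s.re) : Summable fun z => gF m z s := by
  refine Summable.of_norm ?_
  simp_rw [norm_gF' m _ (show 0 < s.re by linarith)]
  exact summable_gA hs

lemma gF_hasDerivAt (m : ℕ) (z : GaussianInt) {s : ℂ} (hs : 0 < s.re) :
    HasDerivAt (fun s => gF m z s) (-(Real.log (gA z) : ℂ) * gF m z s) s := by
  rcases eq_or_ne z 0 with rfl | hz
  · have : (fun s => gF m 0 s) =ᶠ[nhds s] fun _ => 0 := by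
      have : ∀ᶠ w : ℂ in nhds s, w ≠ 0 := eventually_ne_nhds (by rintro rfl; simp at hs)
      filter_upwards [this] with w hw using gF_zero m hw
    simpa [gA_zero] using (hasDerivAt_const s (0:ℂ)).congr_of_eventuallyEq this
  · have hA := gA_pos hz
    have h1 : HasDerivAt (fun s : ℂ => (gA z : ℂ) ^ (-s)) _ s :=
      (hasDerivAt_neg s).const_cpow (Or.inl (by exact_mod_cast hA.ne'))
    convert! h1.const_mul (gChi z ^ m) using 1
    rw [gF, Complex.ofReal_log hA.le]; ring

lemma gL_facts (m : ℕ) {s : ℂ} (hs : 2 < s.re) :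
    DifferentiableAt ℂ (gL m) s ∧
    HasSum (fun z => -(Real.log (gA z) : ℂ) * gF m z s) (deriv (gL m) s) := by
  obtain ⟨r, hr, hrs⟩ := exists_between hs
  have hU : IsOpen {w : ℂ | r < w.re} := isOpen_lt continuous_const Complex.continuous_re
  have hd : ∀ z : GaussianInt, DifferentiableOn ℂ (gF m z) {w : ℂ | r < w.re} := fun z w hw =>
    (gF_hasDerivAt m z (show 0 < w.re by simp at hw; linarith)).differentiableAt.differentiableWithinAt
  have hb : ∀ (z : GaussianInt) (w : ℂ), w ∈ {w : ℂ | r < w.re} → ‖gF m z w‖ ≤ gA z ^ (-r) := by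
    intro z w hw
    replace hw : r < w.re := hw
    rcases eq_or_ne z 0 with rfl | hz
    · rw [norm_gF' _ _ (by linarith), gA_rpow_zero (by linarith), gA_rpow_zero (by linarith)]
    · rw [norm_gF hz]
      exact Real.rpow_le_rpow_of_exponent_le (gA_one_le hz) (by linarith)
  constructor
  · exact (Complex.differentiableOn_tsum_of_summable_norm (summable_gA hr) hd hU hb).differentiableAt
      (hU.mem_nhds hrs)
  · have := Complex.hasSum_deriv_of_summable_norm (summable_gA hr) hd hU hb hrs
    convert! this using 2 with z
    exact (gF_hasDerivAt m z (by linarith)).deriv.symm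
end

section
open Complex

lemma norm_pow_sub_pow_le_mul (x y : ℂ) (hx : ‖x‖ ≤ 1) (hy : ‖y‖ ≤ 1) (n : ℕ) :
    ‖x ^ n - y ^ n‖ ≤ n * ‖x - y‖ := by
  induction n with
  | zero => simp
  | succ n ih =>
    have : x ^ (n+1) - y ^ (n+1) = x ^ n * (x - y) + (x ^ n - y ^ n) * y := by ring
    rw [this]
    refine (norm_add_le _ _).trans ?_
    rw [norm_mul, norm_mul, norm_pow]
    have h1 : ‖x‖ ^ n ≤ 1 := pow_le_one₀ (norm_nonneg _) hx
    have h2 := norm_nonneg (x - y)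
    have h3 := norm_nonneg (x ^ n - y ^ n)
    push_cast
    nlinarith [norm_nonneg y]

lemma norm_gF_le_one (m : ℕ) (z : GaussianInt) {s : ℂ} (hs : 0 < s.re) : ‖gF m z s‖ ≤ 1 := by
  rcases eq_or_ne z 0 with rfl | hz
  · rw [gF_zero, norm_zero]; exact zero_le_one
    rintro rfl; simp at hs
  · rw [norm_gF hz]
    exact Real.rpow_le_one_of_one_le_of_nonpos (gA_one_le hz) (by linarith)

lemma unit_lip (u v : ℂ) (hu : u ≠ 0) (hv : v ≠ 0) :
    ‖v / (‖v‖ : ℂ) - u / (‖u‖ : ℂ)‖ ≤ 2 * ‖v - u‖ / ‖u‖ := by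
  have hu' : 0 < ‖u‖ := norm_pos_iff.2 hu
  have hv' : 0 < ‖v‖ := norm_pos_iff.2 hv
  have hu1 : (‖u‖ : ℂ) ≠ 0 := by exact_mod_cast hu'.ne'
  have hv1 : (‖v‖ : ℂ) ≠ 0 := by exact_mod_cast hv'.ne'
  have : v / (‖v‖ : ℂ) - u / (‖u‖ : ℂ) =
      ((v - u) + (v / (‖v‖ : ℂ)) * ((‖u‖ - ‖v‖ : ℝ) : ℂ)) / (‖u‖ : ℂ) := by
    push_cast
    field_simp
    ring
  rw [this, norm_div, Complex.norm_real, norm_norm]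
  gcongr
  refine (norm_add_le _ _).trans ?_
  rw [norm_mul, norm_div, Complex.norm_real, norm_norm, div_self hv'.ne', one_mul, Complex.norm_real,
    Real.norm_eq_abs, abs_sub_comm]
  linarith [abs_norm_sub_norm_le v u]

lemma cpow_lip {c a b : ℝ} (hc : 0 < c) (ha : c ≤ a) (hb : c ≤ b) {s : ℂ} (hs : 0 < s.re) :
    ‖(b : ℂ) ^ (-s) - (a : ℂ) ^ (-s)‖ ≤ ‖s‖ * c ^ (-s.re - 1) * |b - a| := by
  have := Convex.norm_image_sub_le_of_norm_hasDerivWithin_le (𝕜 := ℝ)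
    (f := fun x : ℝ => (x : ℂ) ^ (-s)) (f' := fun x : ℝ => (-s) * (x : ℂ) ^ (-s - 1))
    (s := Set.Ici c) (C := ‖s‖ * c ^ (-s.re - 1)) (x := a) (y := b) ?_ ?_ (convex_Ici c) ha hb
  · simpa using this
  · intro x hx
    have hx' : 0 < x := hc.trans_le hx
    apply HasDerivAt.hasDerivWithinAt
    apply hasDerivAt_ofReal_cpow_const hx'.ne'
    intro h
    have : s = 0 := by simpa using h
    simp [this] at hs
  · intro x hx
    have hx' : 0 < x := hc.trans_le hx
    rw [norm_mul, norm_neg, Complex.norm_cpow_eq_rpow_re_of_pos hx']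
    simp only [sub_re, neg_re, one_re]
    gcongr ?_ * ?_
    exact Real.rpow_le_rpow_of_nonpos hc hx (by linarith)

lemma gF_diff_bound (m : ℕ) (u v : GaussianInt) (hu : u ≠ 0) (huv : ‖(v : ℂ) - u‖ ≤ 4) {s : ℂ}
    (hs : 7 / 4 < s.re) (hs2 : ‖s‖ ≤ 9 / 4) :
    ‖gF m v s - gF m u s‖ ≤ (64 * m + 137) * (gA u / 2) ^ (-(11 / 4) : ℝ) := by
  have ha1 := gA_one_le hu
  by_cases h8 : gA u < 8
  · have h1 : ‖gF m v s - gF m u s‖ ≤ 2 := by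
      refine (norm_sub_le _ _).trans ?_
      have := norm_gF_le_one m v (s := s) (by linarith)
      have := norm_gF_le_one m u (s := s) (by linarith)
      linarith
    have h2 : (1 / 64 : ℝ) ≤ (gA u / 2) ^ (-(11 / 4) : ℝ) := by
      calc (1 / 64 : ℝ) = 4 ^ (-3 : ℝ) := by
            rw [Real.rpow_neg (by norm_num), show (3:ℝ) = ((3:ℕ):ℝ) by norm_num, Real.rpow_natCast]
            norm_num
        _ ≤ 4 ^ (-(11 / 4) : ℝ) := Real.rpow_le_rpow_of_exponent_le (by norm_num) (by norm_num)
        _ ≤ _ := Real.rpow_le_rpow_of_nonpos (by linarith) (by linarith) (by norm_num)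
    have hm : (0:ℝ) ≤ m := by positivity
    nlinarith
  · push Not at h8
    have hab : |gA v - gA u| ≤ 4 := (abs_norm_sub_norm_le _ _).trans huv
    obtain ⟨hab1, hab2⟩ := abs_le.1 hab
    have hv : v ≠ 0 := by
      rintro rfl
      rw [gA_zero] at hab1
      linarith
    have hvp := gA_pos hv
    have hcu : ((u : ℂ)) ≠ 0 := by simpa using hu
    have hcv : ((v : ℂ)) ≠ 0 := by simpa using hv
    have e1 : gF m v s - gF m u s = (gChi v ^ m - gChi u ^ m) * (gA v : ℂ) ^ (-s) +
        gChi u ^ m * ((gA v : ℂ) ^ (-s) - (gA u : ℂ) ^ (-s)) := by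
      simp only [gF]; ring
    set c := gA u / 2 with hc
    have hc4 : 4 ≤ c := by linarith
    have b1 : ‖gChi v ^ m - gChi u ^ m‖ ≤ (64 * m) * c⁻¹ * (1 / 4) := by
      simp only [gChi, ← pow_mul]
      have n1 : ∀ w : GaussianInt, w ≠ 0 → ‖(w : ℂ) / (gA w : ℂ)‖ ≤ 1 := by
        intro w hw
        rw [norm_div, Complex.norm_real, Real.norm_of_nonneg (gA_nonneg _)]
        exact (div_self (gA_pos hw).ne').le
      refine (norm_pow_sub_pow_le_mul _ _ (n1 v hv) (n1 u hu) _).trans ?_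
      have h := unit_lip u v hcu hcv
      have h' : 2 * ‖(v : ℂ) - u‖ / ‖(u : ℂ)‖ ≤ 2 * 4 / gA u := by
        change _ / gA u ≤ _
        gcongr
      have h'' : 2 * 4 / gA u = 4 * c⁻¹ := by rw [hc]; field_simp
      have h3 : ‖(v : ℂ) / (gA v : ℂ) - u / (gA u : ℂ)‖ ≤ 4 * c⁻¹ := by
        rw [← h'']; exact h.trans h'
      calc ((4 * m : ℕ) : ℝ) * ‖(v : ℂ) / (gA v : ℂ) - u / (gA u : ℂ)‖ ≤ ((4 * m : ℕ) : ℝ) * (4 * c⁻¹) := by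
            gcongr
        _ = _ := by push_cast; ring
    have hcs : c ^ (-s.re) ≤ c ^ (-(7/4) : ℝ) :=
      Real.rpow_le_rpow_of_exponent_le (by linarith) (by linarith)
    have hcs1 : c ^ (-s.re - 1) ≤ c ^ (-(11/4) : ℝ) :=
      Real.rpow_le_rpow_of_exponent_le (by linarith) (by linarith)
    have b2 : ‖(gA v : ℂ) ^ (-s)‖ ≤ c ^ (-(7/4) : ℝ) := by
      rw [Complex.norm_cpow_eq_rpow_re_of_pos hvp, neg_re]
      refine le_trans ?_ hcs
      exact Real.rpow_le_rpow_of_nonpos (by linarith) (by linarith) (by linarith)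
    have b3 : ‖(gA v : ℂ) ^ (-s) - (gA u : ℂ) ^ (-s)‖ ≤ 9 * c ^ (-(11/4) : ℝ) := by
      refine (cpow_lip (c := c) (by linarith) (by linarith) (by linarith) (by linarith)).trans ?_
      calc ‖s‖ * c ^ (-s.re - 1) * |gA v - gA u| ≤ 9 / 4 * c ^ (-(11/4) : ℝ) * 4 := by gcongr
        _ = _ := by ring
    have e2 : c⁻¹ * c ^ (-(7/4) : ℝ) = c ^ (-(11/4) : ℝ) := by
      rw [← Real.rpow_neg_one, ← Real.rpow_add (by linarith)]; norm_num
    rw [e1]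
    refine (norm_add_le _ _).trans ?_
    rw [norm_mul, norm_mul, norm_pow, norm_gChi hu, one_pow, one_mul]
    have hp : 0 ≤ c ^ (-(11/4) : ℝ) := by positivity
    calc _ ≤ (64 * m) * c⁻¹ * (1 / 4) * c ^ (-(7/4) : ℝ) + 9 * c ^ (-(11/4) : ℝ) := by gcongr
      _ = (16 * m) * (c⁻¹ * c ^ (-(7/4) : ℝ)) + 9 * c ^ (-(11/4) : ℝ) := by ring
      _ = (16 * m + 9) * c ^ (-(11/4) : ℝ) := by rw [e2]; ring
      _ ≤ _ := by
        gcongr <;> norm_num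

def gAl : GaussianInt := ⟨2, 1⟩

lemma gAl_ne : gAl ≠ 0 := by decide

lemma gAl_sq : gA gAl ^ 2 = 5 := by
  rw [gA_sq]; norm_num [gAl]

lemma gAl_bij : Function.Bijective
    (fun p : GaussianInt × Fin 5 => gAl * p.1 + (((p.2 : ℕ) : ℤ) : GaussianInt)) := by
  constructor
  · rintro ⟨⟨x, y⟩, r⟩ ⟨⟨x', y'⟩, r'⟩ h
    simp only [gAl, Zsqrtd.ext_iff, Zsqrtd.re_add, Zsqrtd.re_mul, Zsqrtd.im_add, Zsqrtd.im_mul,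
      Zsqrtd.re_intCast, Zsqrtd.im_intCast] at h
    have := r.2
    have := r'.2
    simp only [Prod.mk.injEq, Zsqrtd.mk.injEq, Fin.ext_iff]
    omega
  · rintro ⟨u, v⟩
    refine ⟨⟨⟨v - 2 * ((2 * v - u + (u - 2 * v) % 5) / 5), (2 * v - u + (u - 2 * v) % 5) / 5⟩,
      ⟨((u - 2 * v) % 5).toNat, by omega⟩⟩, ?_⟩
    simp only [gAl, Zsqrtd.ext_iff, Zsqrtd.re_add, Zsqrtd.re_mul, Zsqrtd.im_add, Zsqrtd.im_mul,
      Zsqrtd.re_intCast, Zsqrtd.im_intCast]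
    omega

noncomputable def gG (m : ℕ) (z : GaussianInt) (s : ℂ) : ℂ :=
  ∑ r : Fin 5, (gF m (gAl * z + (((r : ℕ) : ℤ) : GaussianInt)) s - gF m (gAl * z) s)

noncomputable def gH (m : ℕ) (s : ℂ) : ℂ := ∑' z : GaussianInt, gG m z s

lemma gL_mul (m : ℕ) {s : ℂ} (hs : 2 < s.re) :
    gL m s * (1 - 5 * gF m gAl s) = gH m s := by
  have hsum := summable_gF m hs
  obtain ⟨e, he⟩ : ∃ e : (GaussianInt × Fin 5) ≃ GaussianInt, ∀ p,
      e p = gAl * p.1 + (((p.2 : ℕ) : ℤ) : GaussianInt) :=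
    ⟨Equiv.ofBijective _ gAl_bij, fun _ => rfl⟩
  have h1 : Summable fun p : GaussianInt × Fin 5 =>
      gF m (gAl * p.1 + (((p.2 : ℕ) : ℤ) : GaussianInt)) s := by
    simp_rw [← he]
    exact e.summable_iff.2 hsum
  have h2 : gL m s = ∑' z, ∑ r : Fin 5, gF m (gAl * z + (((r : ℕ) : ℤ) : GaussianInt)) s := by
    rw [gL, ← e.tsum_eq]
    simp_rw [he]
    rw [h1.tsum_prod]
    simp_rw [tsum_fintype]
  have h3 : Summable fun z => ∑ r : Fin 5, gF m (gAl * z + (((r : ℕ) : ℤ) : GaussianInt)) s := by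
    have := h1.prod
    simp_rw [tsum_fintype] at this
    exact this
  have h4 : Summable fun z => 5 * gF m (gAl * z) s := by
    simp_rw [gF_mul]
    exact (hsum.mul_left _).mul_left _
  have h5 : ∑' z, 5 * gF m (gAl * z) s = 5 * gF m gAl s * gL m s := by
    simp_rw [gF_mul]
    rw [tsum_mul_left, tsum_mul_left, gL]; ring
  have h6 : gH m s = ∑' z, (∑ r : Fin 5, gF m (gAl * z + (((r : ℕ) : ℤ) : GaussianInt)) s
      - 5 * gF m (gAl * z) s) := by
    rw [gH]
    congr 1; ext z
    simp [gG, Finset.sum_sub_distrib]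
  rw [h6, h3.tsum_sub h4, ← h2, h5]
  ring

lemma gH_diff (m : ℕ) : DifferentiableOn ℂ (gH m) (Metric.ball 2 (1 / 4)) := by
  have hball : ∀ w ∈ Metric.ball (2:ℂ) (1/4), 7 / 4 < w.re ∧ ‖w‖ ≤ 9 / 4 := by
    intro w hw
    rw [mem_ball_iff_norm] at hw
    constructor
    · have := (abs_le.1 (Complex.abs_re_le_norm (w - 2))).1
      simp at this
      linarith
    · have : ‖w‖ ≤ ‖w - 2‖ + ‖(2:ℂ)‖ := by simpa using norm_add_le (w - 2) 2
      simp at this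
      linarith
  have hu : Summable fun z : GaussianInt =>
      5 * ((64 * m + 137) * ((gA gAl * gA z) / 2) ^ (-(11 / 4) : ℝ)) + (if z = 0 then (10:ℝ) else 0) := by
    apply Summable.add
    · have : ∀ z, ((gA gAl * gA z) / 2) ^ (-(11 / 4) : ℝ) = (gA gAl / 2) ^ (-(11 / 4) : ℝ) * gA z ^ (-(11 / 4) : ℝ) := by
        intro z
        rw [← Real.mul_rpow (by have := gA_nonneg gAl; positivity) (gA_nonneg _)]
        congr 1; ring
      simp_rw [this]
      exact (((summable_gA (by norm_num)).mul_left _).mul_left _).mul_left _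
    · exact (hasSum_ite_eq (0 : GaussianInt) (10:ℝ)).summable
  refine Complex.differentiableOn_tsum_of_summable_norm hu ?_ Metric.isOpen_ball ?_
  · intro z w hw
    obtain ⟨h1, h2⟩ := hball w hw
    apply DifferentiableAt.differentiableWithinAt
    apply DifferentiableAt.fun_sum
    intro r _
    exact (gF_hasDerivAt m _ (by linarith)).differentiableAt.sub
      (gF_hasDerivAt m _ (by linarith)).differentiableAt
  · intro z w hw
    obtain ⟨h1, h2⟩ := hball w hw
    rw [gG]
    refine (norm_sum_le _ _).trans ?_
    by_cases hz : z = 0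
    · have : ∀ r : Fin 5, ‖gF m (gAl * z + (((r : ℕ) : ℤ) : GaussianInt)) w - gF m (gAl * z) w‖ ≤ 2 := by
        intro r
        refine (norm_sub_le _ _).trans ?_
        have := norm_gF_le_one m (gAl * z + (((r : ℕ) : ℤ) : GaussianInt)) (s := w) (by linarith)
        have := norm_gF_le_one m (gAl * z) (s := w) (by linarith)
        linarith
      refine (Finset.sum_le_sum fun r _ => this r).trans ?_
      rw [if_pos hz]
      have h0 := gA_nonneg gAl
      have h0' := gA_nonneg z
      have : 0 ≤ 5 * ((64 * m + 137) * ((gA gAl * gA z) / 2) ^ (-(11 / 4) : ℝ)) := by positivity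
      simp only [Finset.sum_const, Finset.card_univ, Fintype.card_fin, nsmul_eq_mul]
      push_cast
      linarith
    · rw [if_neg hz, add_zero, ← gA_mul]
      have : ∀ r : Fin 5, ‖gF m (gAl * z + (((r : ℕ) : ℤ) : GaussianInt)) w - gF m (gAl * z) w‖ ≤
          (64 * m + 137) * (gA (gAl * z) / 2) ^ (-(11 / 4) : ℝ) := by
        intro r
        refine gF_diff_bound m _ _ (mul_ne_zero gAl_ne hz) ?_ h1 h2
        have hr : (r : ℕ) ≤ 4 := by omega
        simp only [map_add, add_sub_cancel_left, map_intCast]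
        simp
        exact_mod_cast hr
      refine (Finset.sum_le_sum fun r _ => this r).trans ?_
      simp only [Finset.sum_const, Finset.card_univ, Fintype.card_fin, nsmul_eq_mul]
      push_cast
      rfl
end

section
open Complex UniqueFactorizationMonoid

noncomputable instance gNormMonoid : NormalizationMonoid GaussianInt :=
  UniqueFactorizationMonoid.strongNormalizationMonoid.toNormalizationMonoid

abbrev GP : Type := {p : GaussianInt // Prime p ∧ normalize p = p}

open Classical in
lemma gMangoldt {z : GaussianInt} (hz : z ≠ 0) :
    HasSum (fun q : GP × ℕ => if q.1.1 ^ (q.2 + 1) ∣ z then Real.log (gA q.1.1) else 0)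
      (Real.log (gA z)) := by
  set fs := normalizedFactors z with hfs
  have key : ∀ q : GP × ℕ, q.1.1 ^ (q.2 + 1) ∣ z ↔ q.2 < fs.count q.1.1 := by
    intro q
    rw [pow_dvd_iff_le_emultiplicity, emultiplicity_eq_count_normalizedFactors q.1.2.1.irreducible hz,
      q.1.2.2, ← Nat.succ_le_iff]
    exact Nat.cast_le
  have hmem : ∀ p ∈ fs.toFinset, Prime p ∧ normalize p = p := by
    intro p hp
    rw [Multiset.mem_toFinset] at hp
    exact ⟨prime_of_normalized_factor p hp, normalize_normalized_factor p hp⟩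
  have hlogprod : ∀ M : Multiset GaussianInt, (∀ p ∈ M, Prime p) →
      Real.log (gA M.prod) = (M.map fun p => Real.log (gA p)).sum := by
    intro M
    induction M using Multiset.induction with
    | empty => simp [gA_one]
    | cons a M ih =>
      intro h
      have ha : Prime a := h a (Multiset.mem_cons_self _ _)
      have hM : ∀ p ∈ M, Prime p := fun p hp => h p (Multiset.mem_cons_of_mem hp)
      rw [Multiset.prod_cons, Multiset.map_cons, Multiset.sum_cons, ← ih hM, gA_mul,
        Real.log_mul (gA_pos ha.ne_zero).ne' (gA_pos _).ne']
      exact Multiset.prod_ne_zero fun h0 => (hM 0 h0).ne_zero rfl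
  have hz' : Real.log (gA z) = ∑ p ∈ fs.toFinset, fs.count p * Real.log (gA p) := by
    have h1 : gA z = gA fs.prod := by
      obtain ⟨u, hu⟩ := prod_normalizedFactors hz
      rw [← hu, gA_mul]
      have h2 : gA (u : GaussianInt) * gA ((u⁻¹ : GaussianIntˣ) : GaussianInt) = 1 := by
        rw [← gA_mul, Units.mul_inv, gA_one]
      have h3 := gA_one_le u.ne_zero
      have h4 := gA_one_le (u⁻¹).ne_zero
      have : gA (u : GaussianInt) = 1 := by nlinarith
      rw [this, mul_one]
    rw [h1, hlogprod fs fun p hp => (hmem p (Multiset.mem_toFinset.2 hp)).1,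
      Finset.sum_multiset_map_count]
    simp
  let T : Finset (GP × ℕ) := (fs.toFinset.subtype (fun p => Prime p ∧ normalize p = p)) ×ˢ Finset.range (Multiset.card fs)
  have h := hasSum_sum_of_ne_finset_zero (s := T) (L := SummationFilter.unconditional _)
    (f := fun q : GP × ℕ => if q.1.1 ^ (q.2 + 1) ∣ z then Real.log (gA q.1.1) else 0) ?_
  · convert! h using 1
    simp only [key]
    rw [hz', show T = _ from rfl, Finset.sum_product]
    have h5 : ∀ x : GP, (∑ e ∈ Finset.range (Multiset.card fs), if e < fs.count x.1 then Real.log (gA x.1) else 0)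
        = fs.count x.1 * Real.log (gA x.1) := by
      intro x
      rw [← Finset.sum_filter, Finset.sum_const, nsmul_eq_mul]
      congr 2
      have : (Finset.range (Multiset.card fs)).filter (fun e => e < fs.count x.1) = Finset.range (fs.count x.1) := by
        ext e
        have := Multiset.count_le_card x.1 fs
        simp; omega
      rw [this, Finset.card_range]
    simp only [h5]
    exact (Finset.sum_subtype_of_mem (fun p => fs.count p * Real.log (gA p)) hmem).symm
  · intro q hq
    rw [if_neg]
    rw [key]
    intro hlt
    apply hq
    have h6 : q.1.1 ∈ fs := Multiset.count_pos.1 (by omega)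
    have h7 := Multiset.count_le_card q.1.1 fs
    refine Finset.mem_product.2
      ⟨Finset.mem_subtype.2 (Multiset.mem_toFinset.2 h6), Finset.mem_range.2 (by omega)⟩

noncomputable def gq (q : GP × ℕ) : GaussianInt := q.1.1 ^ (q.2 + 1)

noncomputable def gl (q : GP × ℕ) : ℝ := Real.log (gA q.1.1)

lemma gq_ne (q : GP × ℕ) : gq q ≠ 0 := pow_ne_zero _ q.1.2.1.ne_zero

lemma gl_nonneg (q : GP × ℕ) : 0 ≤ gl q := Real.log_nonneg (gA_one_le q.1.2.1.ne_zero)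

open Classical in
lemma gMangoldt' {z : GaussianInt} (hz : z ≠ 0) :
    HasSum (fun q : GP × ℕ => if gq q ∣ z then gl q else 0) (Real.log (gA z)) := gMangoldt hz

noncomputable def gB (m : ℕ) (s : ℂ) : ℂ := ∑' q : GP × ℕ, (gl q : ℂ) * gF m (gq q) s

open Classical in
lemma gDouble (m : ℕ) {s : ℂ} (hs : 2 < s.re) :
    Summable (fun p : GaussianInt × (GP × ℕ) =>
      ((if gq p.2 ∣ p.1 then gl p.2 else 0 : ℝ) : ℂ) * gF m p.1 s) := by
  have hs0 : s ≠ 0 := by rintro rfl; simp at hs; linarith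
  apply Summable.of_norm
  rw [summable_prod_of_nonneg (fun p => norm_nonneg _)]
  have hn : ∀ z, HasSum (fun q : GP × ℕ => ‖((if gq q ∣ z then gl q else 0 : ℝ) : ℂ) * gF m z s‖)
      ‖-(Real.log (gA z) : ℂ) * gF m z s‖ := by
    intro z
    rcases eq_or_ne z 0 with rfl | hz
    · simp [gF_zero m hs0]
    · simp_rw [norm_mul, norm_neg, Complex.norm_real]
      apply HasSum.mul_right
      rw [Real.norm_of_nonneg (Real.log_nonneg (gA_one_le hz))]
      convert! gMangoldt hz using 2 with q
      rw [Real.norm_of_nonneg]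
      · rfl
      · split_ifs
        · exact gl_nonneg q
        · exact le_rfl
  refine ⟨fun z => (hn z).summable, ?_⟩
  simp_rw [fun z => (hn z).tsum_eq]
  exact (gL_facts m hs).2.summable.norm

lemma gB_summable (m : ℕ) {s : ℂ} (hs : 2 < s.re) : Summable fun q => (gl q : ℂ) * gF m (gq q) s := by
  have h := (gDouble m hs).comp_injective (i := fun q => (gq q, q)) (fun a b h => (Prod.ext_iff.1 h).2)
  refine h.congr fun q => ?_
  simp

open Classical in
lemma gL_deriv (m : ℕ) {s : ℂ} (hs : 2 < s.re) : deriv (gL m) s = -(gB m s * gL m s) := by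
  have hs0 : s ≠ 0 := by rintro rfl; simp at hs; linarith
  have hD := gDouble m hs
  have h1 : ∀ z, ∑' q : GP × ℕ, ((if gq q ∣ z then gl q else 0 : ℝ) : ℂ) * gF m z s =
      (Real.log (gA z) : ℂ) * gF m z s := by
    intro z
    rcases eq_or_ne z 0 with rfl | hz
    · simp [gF_zero m hs0]
    · rw [tsum_mul_right]
      congr 1
      have := Complex.hasSum_ofReal.2 (gMangoldt' hz)
      rw [← this.tsum_eq]
  have h2 : ∀ q : GP × ℕ, ∑' z, ((if gq q ∣ z then gl q else 0 : ℝ) : ℂ) * gF m z s =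
      (gl q : ℂ) * gF m (gq q) s * gL m s := by
    intro q
    have hinj : Function.Injective (fun w => gq q * w) := mul_right_injective₀ (gq_ne q)
    rw [← hinj.tsum_eq]
    · have h4 : ∀ w, ((if gq q ∣ gq q * w then gl q else 0 : ℝ) : ℂ) * gF m (gq q * w) s =
          (gl q : ℂ) * gF m (gq q) s * gF m w s := by
        intro w
        rw [if_pos (dvd_mul_right _ _), gF_mul, mul_assoc]
      simp_rw [h4]
      rw [tsum_mul_left, gL]
    · intro z hz
      by_contra hne
      apply hz
      have : ¬ gq q ∣ z := fun ⟨w, hw⟩ => hne ⟨w, hw.symm⟩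
      simp [this]
  have h3 := Summable.tsum_comm (f := fun (z : GaussianInt) (q : GP × ℕ) =>
    ((if gq q ∣ z then gl q else 0 : ℝ) : ℂ) * gF m z s) hD
  simp_rw [h1, h2] at h3
  rw [tsum_mul_right] at h3
  rw [← (gL_facts m hs).2.tsum_eq, gB, h3]
  simp_rw [neg_mul]
  rw [tsum_neg]
end

section
open Complex Filter Topology

lemma gL_hasDerivAt_real (m : ℕ) {t : ℝ} (ht : 2 < t) :
    HasDerivAt (fun t : ℝ => gL m t) (-(gB m t * gL m t)) t := by
  have h := (gL_facts m (s := (t:ℂ)) (by simpa using ht)).1.hasDerivAt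
  rw [gL_deriv m (by simpa using ht)] at h
  exact h.comp_ofReal

lemma gl_summable {t : ℝ} (ht : 2 < t) : Summable fun q => gl q * gA (gq q) ^ (-t) := by
  have h := (gB_summable 0 (s := (t:ℂ)) (by simpa using ht)).norm
  refine h.congr fun q => ?_
  rw [norm_mul, Complex.norm_real, Real.norm_of_nonneg (gl_nonneg q), norm_gF (gq_ne q)]
  simp

lemma gB_bound (m : ℕ) {s t : ℝ} (hs : 2 < s) (hst : s ≤ t) :
    ‖gB m t‖ ≤ ∑' q, gl q * gA (gq q) ^ (-s) := by
  refine tsum_of_norm_bounded (gl_summable hs).hasSum fun q => ?_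
  rw [norm_mul, Complex.norm_real, Real.norm_of_nonneg (gl_nonneg q), norm_gF (gq_ne q)]
  have := gl_nonneg q
  gcongr
  · exact gA_one_le (gq_ne q)
  · simpa using hst

lemma gChi_unit {z : GaussianInt} (hz : gA z = 1) : gChi z = 1 := by
  have h : z.re ^ 2 + z.im ^ 2 = 1 := by
    have := gA_sq z
    rw [hz] at this
    exact_mod_cast this.symm
  rw [gChi, hz]
  have h1 : (z.re = 0 ∧ z.im ^ 2 = 1) ∨ (z.im = 0 ∧ z.re ^ 2 = 1) := by
    by_cases h0 : z.re = 0
    · left; refine ⟨h0, ?_⟩; rw [h0] at h; linarith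
    · right
      have : 0 < z.re ^ 2 := by positivity
      have h2 : z.im ^ 2 = 0 := by nlinarith [sq_nonneg z.im]
      exact ⟨by simpa using h2, by linarith⟩
  rw [GaussianInt.toComplex_def]
  rcases h1 with ⟨h1, h2⟩ | ⟨h1, h2⟩
  · have h3 : ((z.im : ℂ)) ^ 2 = 1 := by exact_mod_cast h2
    rw [h1]
    have : ((((0:ℤ) : ℂ) + z.im * I) / ((1:ℝ):ℂ)) ^ 4 = ((z.im : ℂ) ^ 2) ^ 2 * (I ^ 2) ^ 2 := by
      push_cast; ring
    rw [this, h3, Complex.I_sq]; norm_num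
  · have h3 : ((z.re : ℂ)) ^ 2 = 1 := by exact_mod_cast h2
    rw [h1]
    have : (((z.re : ℂ) + ((0:ℤ) : ℂ) * I) / ((1:ℝ):ℂ)) ^ 4 = ((z.re : ℂ) ^ 2) ^ 2 := by
      push_cast; ring
    rw [this, h3]; norm_num

open Classical in
lemma gL_ne_large (m : ℕ) : ∀ᶠ t : ℝ in atTop, gL m t ≠ 0 := by
  let g : GaussianInt → ℝ := fun z => if gA z = 1 then 1 else 0
  have hg0 : ∀ z, 0 ≤ g z := fun z => by simp only [g]; split_ifs <;> norm_num
  have hgb : ∀ z, g z ≤ gA z ^ (-3:ℝ) := by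
    intro z
    simp only [g]
    split_ifs with h
    · rw [h]; simp
    · exact Real.rpow_nonneg (gA_nonneg _) _
  have hgs : Summable g := Summable.of_nonneg_of_le hg0 hgb (summable_gA (by norm_num))
  have hpos : 0 < ∑' z, g z := hgs.tsum_pos hg0 1 (by simp [g, gA_one])
  have ht : Tendsto (fun t : ℝ => gL m t) atTop (𝓝 (∑' z, (g z : ℂ))) := by
    refine tendsto_tsum_of_dominated_convergence (bound := fun z => gA z ^ (-3:ℝ))
      (summable_gA (by norm_num)) ?_ ?_
    · intro z
      rcases eq_or_ne z 0 with rfl | hz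
      · have : g 0 = 0 := by simp [g, gA_zero]
        rw [this]
        refine tendsto_const_nhds.congr' ?_
        filter_upwards [eventually_gt_atTop (0:ℝ)] with t ht
        rw [gF_zero]
        · simp
        · exact_mod_cast ht.ne'
      · by_cases h : gA z = 1
        · have : g z = 1 := by simp [g, h]
          rw [this]
          refine tendsto_const_nhds.congr fun t => ?_
          rw [gF, gChi_unit h, h]; simp
        · have : g z = 0 := by simp [g, h]
          rw [this]
          have h1 : 1 < gA z := lt_of_le_of_ne (gA_one_le hz) (Ne.symm h)
          rw [Complex.ofReal_zero, tendsto_zero_iff_norm_tendsto_zero]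
          have : ∀ t : ℝ, ‖gF m z t‖ = ((gA z)⁻¹) ^ t := by
            intro t
            rw [norm_gF hz, Complex.ofReal_re, Real.rpow_neg (gA_nonneg z), Real.inv_rpow (gA_nonneg z)]
          simp_rw [this]
          exact tendsto_rpow_atTop_of_base_lt_one _ (by have := gA_nonneg z; linarith [inv_nonneg.2 this])
            (inv_lt_one_of_one_lt₀ h1)
    · filter_upwards [eventually_ge_atTop (3:ℝ)] with t ht z
      rw [norm_gF' m z (by simp; linarith)]
      rcases eq_or_ne z 0 with rfl | hz
      · rw [gA_rpow_zero, gA_rpow_zero] <;> simp; linarith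
      · exact Real.rpow_le_rpow_of_exponent_le (gA_one_le hz) (by simpa using ht)
  rw [← Complex.ofReal_tsum] at ht
  exact ht.eventually_ne (by exact_mod_cast hpos.ne')

lemma gL_ne (m : ℕ) {s : ℝ} (hs : 2 < s) : gL m s ≠ 0 := by
  intro h0
  obtain ⟨T, hT, hsT⟩ := ((gL_ne_large m).and (eventually_ge_atTop s)).exists
  apply hT
  refine eq_zero_of_abs_deriv_le_mul_abs_self_of_eq_zero_right (f := fun t : ℝ => gL m t)
    (f' := fun t : ℝ => -(gB m t * gL m t)) (K := ∑' q, gl q * gA (gq q) ^ (-s)) (a := s) (b := T)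
    ?_ ?_ h0 ?_ T ⟨hsT, le_rfl⟩
  · intro t ht
    exact (gL_hasDerivAt_real m (by linarith [ht.1])).continuousAt.continuousWithinAt
  · intro t ht
    exact (gL_hasDerivAt_real m (by linarith [ht.1])).hasDerivWithinAt
  · intro t ht
    rw [norm_neg, norm_mul]
    gcongr
    exact gB_bound m hs ht.1

noncomputable def gLog (m : ℕ) (t : ℝ) : ℝ := Real.log ‖gL m t‖

lemma gLog_hasDerivAt (m : ℕ) {t : ℝ} (ht : 2 < t) :
    HasDerivAt (gLog m) (-(gB m t).re) t := by
  have h1 := (gL_hasDerivAt_real m ht).norm_sq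
  have hne := gL_ne m ht
  have hpos : 0 < ‖gL m t‖ := norm_pos_iff.2 hne
  have h2 := (h1.log (by positivity)).const_mul (1/2)
  have e : gLog m = fun t : ℝ => 1 / 2 * Real.log (‖gL m t‖ ^ 2) := by
    ext t
    rw [gLog, Real.log_pow]; push_cast; ring
  rw [e]
  convert! h2 using 1
  have h3 : inner ℝ (gL m t) (-(gB m t * gL m t)) = -(gB m t).re * ‖gL m t‖ ^ 2 := by
    rw [Complex.inner, ← Complex.normSq_eq_norm_sq, Complex.normSq_apply]
    simp
    ring
  rw [h3]
  field_simp

lemma gB_re_hasSum (m : ℕ) {t : ℝ} (ht : 2 < t) :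
    HasSum (fun q => gl q * gA (gq q) ^ (-t) * (gChi (gq q) ^ m).re) (gB m t).re := by
  have h := Complex.hasSum_re (gB_summable m (s := (t:ℂ)) (by simpa using ht)).hasSum
  convert! h using 2 with q
  rw [gF, ← Complex.ofReal_neg, ← Complex.ofReal_cpow (gA_nonneg _), Complex.re_ofReal_mul,
    mul_comm (gChi _ ^ m), Complex.re_ofReal_mul]
  ring

lemma gLog_mono (c : ℕ → ℝ) (n : ℕ) (C : ℝ)
    (h : ∀ t : ℝ, 2 < t → t ≤ 3 → ∑ m ∈ Finset.range n, c m * (gB m t).re ≤ C) :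
    ∃ K, ∀ t : ℝ, 2 < t → t ≤ 3 → ∑ m ∈ Finset.range n, c m * gLog m t ≤ K := by
  refine ⟨∑ m ∈ Finset.range n, c m * gLog m 3 + C * 3 + |C| * 3, fun t ht ht3 => ?_⟩
  have hd : ∀ x : ℝ, 2 < x → HasDerivAt (fun x => ∑ m ∈ Finset.range n, c m * gLog m x + C * x)
      (∑ m ∈ Finset.range n, c m * (-(gB m x).re) + C * 1) x := by
    intro x hx
    exact (HasDerivAt.fun_sum fun m _ => (gLog_hasDerivAt m hx).const_mul (c m)).add
      ((hasDerivAt_id x).const_mul C)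
  have hm := monotoneOn_of_deriv_nonneg (convex_Icc t 3)
    (f := fun x => ∑ m ∈ Finset.range n, c m * gLog m x + C * x)
    (fun x hx => (hd x (by linarith [hx.1])).continuousAt.continuousWithinAt)
    (fun x hx => by
      rw [interior_Icc] at hx
      exact (hd x (by linarith [hx.1])).differentiableAt.differentiableWithinAt)
    (fun x hx => by
      rw [interior_Icc] at hx
      rw [(hd x (by linarith [hx.1])).deriv]
      have := h x (by linarith [hx.1]) hx.2.le
      simp only [mul_neg, Finset.sum_neg_distrib]
      linarith)
  have := hm ⟨le_rfl, ht3⟩ ⟨ht3, le_rfl⟩ ht3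
  simp only at this
  nlinarith [neg_abs_le C, abs_nonneg C]

/-- behaviour at 2 -/
lemma gH_diffAt (m : ℕ) : DifferentiableAt ℂ (gH m) 2 :=
  (gH_diff m).differentiableAt (Metric.isOpen_ball.mem_nhds (by simp))

lemma gf_two (m : ℕ) : 1 - 5 * gF m gAl 2 = 1 - gChi gAl ^ m := by
  have h : (gA gAl : ℂ) ^ (-2 : ℂ) = 1 / 5 := by
    rw [Complex.cpow_neg, show (2:ℂ) = ((2:ℕ):ℂ) by norm_num, Complex.cpow_natCast, ← Complex.ofReal_pow,
      gAl_sq]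
    norm_num
  rw [gF, h]; ring

lemma gAl_pow (m : ℕ) : (⟨-7, 24⟩ : GaussianInt) ^ (m + 1) ≠ 25 ^ (m + 1) := by
  have h : ∀ m : ℕ, ((⟨-7, 24⟩ : GaussianInt) ^ (m + 1)).re % 5 = 3 ∧
      ((⟨-7, 24⟩ : GaussianInt) ^ (m + 1)).im % 5 = 4 := by
    intro m
    induction m with
    | zero => simp
    | succ m ih =>
      rw [pow_succ, Zsqrtd.re_mul, Zsqrtd.im_mul]
      simp only
      omega
  intro he
  have h1 := (h m).2
  rw [he] at h1
  have h2 : (25 : GaussianInt) ^ (m+1) = (((25 : ℤ) ^ (m+1) : ℤ) : GaussianInt) := by push_cast; rfl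
  rw [h2, Zsqrtd.im_intCast] at h1
  simp at h1

lemma gf_ne (m : ℕ) : 1 - gChi gAl ^ (m + 1) ≠ 0 := by
  intro h
  have h1 : gChi gAl ^ (m + 1) = 1 := (sub_eq_zero.1 h).symm
  have h2 : gChi gAl = ((⟨-7, 24⟩ : GaussianInt) : ℂ) / 25 := by
    rw [gChi, div_pow, show (gA gAl : ℂ) ^ 4 = ((gA gAl ^ 2) ^ 2 : ℝ) by push_cast; ring, gAl_sq,
      ← map_pow]
    have : gAl ^ 4 = ⟨-7, 24⟩ := by decide
    rw [this]; norm_num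
  rw [h2, div_pow, div_eq_one_iff_eq (pow_ne_zero _ (by norm_num))] at h1
  apply gAl_pow m
  apply GaussianInt.toComplex_injective
  rw [map_pow, h1, map_pow, map_ofNat]

lemma ofReal_tendsto_two : Tendsto (fun t : ℝ => (t : ℂ)) (𝓝[>] 2) (𝓝 2) := by
  have : Tendsto (fun t : ℝ => (t : ℂ)) (𝓝 2) (𝓝 ((2:ℝ):ℂ)) := Complex.continuous_ofReal.tendsto 2
  simpa using this.mono_left nhdsWithin_le_nhds

noncomputable def gQ (m : ℕ) (s : ℂ) : ℂ := gH m s / (1 - 5 * gF m gAl s)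

lemma gQ_diff (m : ℕ) : DifferentiableAt ℂ (gQ (m + 1)) 2 := by
  have h : DifferentiableAt ℂ (fun s => gF (m+1) gAl s) 2 :=
    (gF_hasDerivAt (m+1) gAl (s := 2) (by simp)).differentiableAt
  refine (gH_diffAt (m+1)).div ((differentiableAt_const _).sub (h.const_mul 5)) ?_
  rw [gf_two]; exact gf_ne m

lemma gL_eq_gQ (m : ℕ) : (fun t : ℝ => gL (m + 1) t) =ᶠ[𝓝[>] 2] fun t : ℝ => gQ (m + 1) t := by
  have h : ContinuousAt (fun s => gF (m+1) gAl s) 2 :=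
    (gF_hasDerivAt (m+1) gAl (s := 2) (by simp)).continuousAt
  have h1 : ∀ᶠ s in 𝓝 (2:ℂ), 1 - 5 * gF (m+1) gAl s ≠ 0 := by
    have hc : ContinuousAt (fun s => 1 - 5 * gF (m+1) gAl s) 2 :=
      continuousAt_const.sub (continuousAt_const.mul h)
    refine hc.eventually_ne ?_
    rw [gf_two]; exact gf_ne m
  filter_upwards [ofReal_tendsto_two.eventually h1, self_mem_nhdsWithin] with t ht1 ht
  rw [gQ, ← gL_mul (m+1) (by simpa using ht), mul_div_cancel_right₀ _ ht1]

lemma gL_tendsto (m : ℕ) : Tendsto (fun t : ℝ => gL (m + 1) t) (𝓝[>] 2) (𝓝 (gQ (m + 1) 2)) :=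
  ((gQ_diff m).continuousAt.tendsto.comp ofReal_tendsto_two).congr' (gL_eq_gQ m).symm

lemma gL_zero_bigO : (fun t : ℝ => gL 0 t) =O[𝓝[>] 2] fun t : ℝ => (t - 2)⁻¹ := by
  have hd : HasDerivAt (fun s => 1 - 5 * gF 0 gAl s) (-(5 * (-(Real.log (gA gAl) : ℂ) * gF 0 gAl 2))) 2 :=
    ((gF_hasDerivAt 0 gAl (s := 2) (by simp)).const_mul 5).const_sub 1
  have hne : (-(5 * (-(Real.log (gA gAl) : ℂ) * gF 0 gAl 2))) ≠ 0 := by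
    have h2 := gf_two 0
    simp only [pow_zero, sub_self] at h2
    have h3 : gF 0 gAl 2 = 1 / 5 := by linear_combination (-1/5) * h2
    rw [h3]
    have : Real.log (gA gAl) ≠ 0 := by
      apply Real.log_ne_zero_of_pos_of_ne_one (gA_pos gAl_ne)
      intro h
      have := gAl_sq
      rw [h] at this
      norm_num at this
    have h4 : (Real.log (gA gAl) : ℂ) ≠ 0 := by exact_mod_cast this
    simpa using h4
  have h1 := (HasDerivAtFilter.isTheta_sub hd hne).2.comp_tendsto
    (ofReal_tendsto_two.prodMk (tendsto_pure.2 (Eventually.of_forall fun _ => rfl)))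
  have hH : (fun t : ℝ => gH 0 t) =O[𝓝[>] 2] fun _ : ℝ => (1:ℝ) :=
    ((gH_diffAt 0).continuousAt.tendsto.comp ofReal_tendsto_two).isBigO_one ℝ
  simp only [Function.comp_def, gf_two] at h1
  simp only [pow_zero, sub_self, sub_zero] at h1
  -- (t-2) = O(f), L f = H = O(1)
  have h2 : (fun t : ℝ => ((t:ℂ) - 2) * gL 0 t) =O[𝓝[>] 2] fun _ : ℝ => (1:ℝ) := by
    refine (h1.mul (Asymptotics.isBigO_refl (fun t : ℝ => gL 0 t) _)).trans (hH.congr' ?_ EventuallyEq.rfl)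
    filter_upwards [self_mem_nhdsWithin] with t ht
    rw [← gL_mul 0 (by simpa using ht), mul_comm]
  have h3 := (Asymptotics.isBigO_refl (fun t : ℝ => (t - 2)⁻¹) (𝓝[>] 2)).smul h2
  refine h3.congr' ?_ ?_
  · filter_upwards [self_mem_nhdsWithin] with t ht
    have : (2:ℝ) < t := ht
    have h5 : (t:ℂ) - 2 ≠ 0 := by
      have : t - 2 ≠ 0 := by linarith
      exact_mod_cast this
    rw [Complex.real_smul]
    push_cast
    field_simp
  · exact Eventually.of_forall fun t => by simp

lemma gQ_ne (m : ℕ) : gQ (m + 1) 2 ≠ 0 := by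
  intro h0
  have hm : (fun t : ℝ => gL (m + 1) t) =O[𝓝[>] 2] fun t : ℝ => t - 2 := by
    have h1 := (gQ_diff m).hasDerivAt.isBigO_sub.comp_tendsto ofReal_tendsto_two
    simp only [h0, sub_zero, Function.comp_def] at h1
    refine ((gL_eq_gQ m).trans_isBigO h1).trans ?_
    refine Asymptotics.isBigO_of_le _ fun t => ?_
    rw [← Complex.norm_real]; simp
  have h2m : (fun t : ℝ => gL (2 * (m + 1)) t) =O[𝓝[>] 2] fun _ : ℝ => (1:ℝ) :=
    (gL_tendsto (2 * m + 1)).isBigO_one ℝ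
  have hprod := ((gL_zero_bigO.pow 3).mul (hm.pow 4)).mul h2m
  have hto : Tendsto (fun t : ℝ => ((t - 2)⁻¹ ^ 3 * (t - 2) ^ 4) * 1) (𝓝[>] 2) (𝓝 0) := by
    have : Tendsto (fun t : ℝ => t - 2) (𝓝[>] 2) (𝓝 0) := by
      have h : Tendsto (fun t : ℝ => t - 2) (𝓝 2) (𝓝 (2 - 2)) := (continuous_id.sub continuous_const).tendsto 2
      rw [sub_self] at h
      exact h.mono_left nhdsWithin_le_nhds
    refine this.congr' ?_
    filter_upwards [self_mem_nhdsWithin] with t ht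
    have : t - 2 ≠ 0 := by
      have : (2:ℝ) < t := ht
      linarith
    field_simp
  have hz := (hprod.trans_tendsto hto).norm
  rw [norm_zero] at hz
  -- lower bound
  let c : ℕ → ℝ := fun j => (if j = 0 then -3 else 0) + (if j = m + 1 then -4 else 0) +
    (if j = 2 * (m + 1) then -1 else 0)
  have hc : ∀ x : ℕ → ℝ, ∑ j ∈ Finset.range (2 * (m + 1) + 1), c j * x j =
      -3 * x 0 - 4 * x (m + 1) - x (2 * (m + 1)) := by
    intro x
    have e1 : m + 1 < 2 * (m + 1) + 1 := by omega
    simp only [c, add_mul, Finset.sum_add_distrib, ite_mul, zero_mul, Finset.sum_ite_eq',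
      Finset.mem_range, Nat.lt_succ_self, if_true, Nat.succ_pos, e1]
    ring
  obtain ⟨K, hK⟩ := gLog_mono c (2 * (m + 1) + 1) 0 (by
    intro t ht _
    rw [hc (fun j => (gB j t).re)]
    have h := (((gB_re_hasSum 0 ht).mul_left 3).add ((gB_re_hasSum (m+1) ht).mul_left 4)).add
      (gB_re_hasSum (2 * (m+1)) ht)
    have hnn : 0 ≤ 3 * (gB 0 t).re + 4 * (gB (m+1) t).re + (gB (2 * (m+1)) t).re := by
      refine h.nonneg fun q => ?_
      have hn : ‖gChi (gq q) ^ (m+1)‖ = 1 := by rw [norm_pow, norm_gChi (gq_ne q), one_pow]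
      rw [mul_comm 2 (m+1), pow_mul]
      set w := gChi (gq q) ^ (m+1)
      have hw : w.re ^ 2 + w.im ^ 2 = 1 := by
        have : Complex.normSq w = 1 := by rw [Complex.normSq_eq_norm_sq, hn]; norm_num
        rw [Complex.normSq_apply] at this
        linarith
      have h1 : 0 ≤ gl q * gA (gq q) ^ (-t) :=
        mul_nonneg (gl_nonneg q) (Real.rpow_nonneg (gA_nonneg _) _)
      have h2 : (w ^ 2).re = w.re ^ 2 - w.im ^ 2 := by rw [sq, Complex.mul_re]; ring
      have h3 : 3 * (gl q * gA (gq q) ^ (-t) * (gChi (gq q) ^ 0).re) + 4 * (gl q * gA (gq q) ^ (-t) * w.re)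
        + gl q * gA (gq q) ^ (-t) * (w ^ 2).re = (gl q * gA (gq q) ^ (-t)) * (2 * (1 + w.re) ^ 2) := by
        rw [h2, pow_zero, Complex.one_re]
        linear_combination (-gl q * gA (gq q) ^ (-t)) * hw
      rw [h3]
      positivity
    linarith)
  have hev : ∀ᶠ t : ℝ in 𝓝[>] 2, Real.exp (-K) ≤ ‖gL 0 t ^ 3 * gL (m + 1) t ^ 4 * gL (2 * (m + 1)) t‖ := by
    have h3 : ∀ᶠ t : ℝ in 𝓝[>] 2, t ≤ 3 :=
      nhdsWithin_le_nhds (eventually_le_nhds (by norm_num))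
    filter_upwards [self_mem_nhdsWithin, h3] with t ht ht3
    have h := hK t ht ht3
    rw [hc (fun j => gLog j t)] at h
    have n0 := norm_pos_iff.2 (gL_ne 0 ht)
    have n1 := norm_pos_iff.2 (gL_ne (m+1) ht)
    have n2 := norm_pos_iff.2 (gL_ne (2*(m+1)) ht)
    rw [norm_mul, norm_mul, norm_pow, norm_pow, ← Real.le_log_iff_exp_le (by positivity),
      Real.log_mul (by positivity) (by positivity), Real.log_mul (by positivity) (by positivity),
      Real.log_pow, Real.log_pow]
    simp only [gLog] at h
    push_cast
    linarith
  have := ge_of_tendsto hz hev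
  linarith [Real.exp_pos (-K)]

lemma gLog_tendsto (m : ℕ) :
    Tendsto (gLog (m + 1)) (𝓝[>] 2) (𝓝 (Real.log ‖gQ (m + 1) 2‖)) :=
  ((gL_tendsto m).norm).log (norm_ne_zero_iff.2 (gQ_ne m))
end

section
open Complex Filter Topology

lemma re_pow_conj (w : ℂ) (hw : ‖w‖ = 1) (a b : ℕ) :
    (w ^ a * (starRingEnd ℂ w) ^ b).re = (w ^ ((a - b) + (b - a))).re := by
  have h1 : w * starRingEnd ℂ w = 1 := by
    rw [Complex.mul_conj, Complex.normSq_eq_norm_sq, hw]; norm_num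
  rcases le_total b a with h | h
  · obtain ⟨d, rfl⟩ := Nat.exists_eq_add_of_le h
    have e : b + d - b + (b - (b + d)) = d := by omega
    rw [e, pow_add, show w ^ b * w ^ d * (starRingEnd ℂ w) ^ b = w ^ d * (w * starRingEnd ℂ w) ^ b by
      rw [mul_pow]; ring, h1, one_pow, mul_one]
  · obtain ⟨d, rfl⟩ := Nat.exists_eq_add_of_le h
    have e : a - (a + d) + (a + d - a) = d := by omega
    rw [e, pow_add, show w ^ a * ((starRingEnd ℂ w) ^ a * (starRingEnd ℂ w) ^ d) =
      (starRingEnd ℂ w) ^ d * (w * starRingEnd ℂ w) ^ a by rw [mul_pow]; ring, h1, one_pow, mul_one,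
      ← map_pow, Complex.conj_re]

noncomputable def tco (J : ℕ) (p : ℕ × ℕ) : ℝ :=
  (-1) ^ (p.1 + p.2) * (J.choose p.1 : ℝ) * (J.choose p.2 : ℝ)

def tdist (p : ℕ × ℕ) : ℕ := (p.1 - p.2) + (p.2 - p.1)

lemma tco_sum (J : ℕ) (w : ℂ) (hw : ‖w‖ = 1) :
    ∑ p ∈ Finset.range (J + 1) ×ˢ Finset.range (J + 1), tco J p * (w ^ tdist p).re =
      (‖1 - w‖ ^ 2) ^ J := by
  have h1 : (((‖1 - w‖ ^ 2) ^ J : ℝ) : ℂ) = (1 - w) ^ J * (1 - starRingEnd ℂ w) ^ J := by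
    rw [← Complex.normSq_eq_norm_sq]
    push_cast
    rw [← Complex.mul_conj, mul_pow]
    simp
  have h2 : ∀ x : ℂ, (1 - x) ^ J = ∑ a ∈ Finset.range (J + 1), (-1) ^ a * (J.choose a : ℂ) * x ^ a := by
    intro x
    rw [sub_eq_neg_add, add_pow]
    refine Finset.sum_congr rfl fun a _ => ?_
    rw [neg_pow]; ring
  have h3 : ((‖1 - w‖ ^ 2) ^ J : ℝ) = ((1 - w) ^ J * (1 - starRingEnd ℂ w) ^ J).re := by
    rw [← h1, Complex.ofReal_re]
  rw [h3, h2, h2, Finset.sum_mul_sum, ← Finset.sum_product', Complex.re_sum]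
  refine Finset.sum_congr rfl fun p _ => ?_
  have h4 : (-1) ^ p.1 * (J.choose p.1 : ℂ) * w ^ p.1 * ((-1) ^ p.2 * (J.choose p.2 : ℂ) *
      (starRingEnd ℂ w) ^ p.2) = ((tco J p : ℝ) : ℂ) * (w ^ p.1 * (starRingEnd ℂ w) ^ p.2) := by
    simp only [tco]; push_cast; ring
  rw [h4, Complex.re_ofReal_mul, re_pow_conj w hw]
  rfl

lemma trig_exists (δ : ℝ) (hδ : 0 < δ) (hδ1 : δ ≤ 1) : ∃ (n : ℕ) (c : ℕ → ℝ), 0 < c 0 ∧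
    ∀ w : ℂ, ‖w‖ = 1 → ∑ m ∈ Finset.range (n + 1), c m * (w ^ m).re ≤ 1 ∧
      (δ ≤ ‖w + 1‖ → ∑ m ∈ Finset.range (n + 1), c m * (w ^ m).re ≤ 0) := by
  set ρ : ℝ := 1 - δ ^ 2 / 4 with hρ
  have hρ0 : 0 < ρ := by nlinarith
  have hρ1 : ρ < 1 := by rw [hρ]; nlinarith [sq_pos_of_pos hδ]
  obtain ⟨J, hJ⟩ : ∃ J : ℕ, ((J:ℝ) + 1) * ρ ^ J < 1 := by
    have t1 := tendsto_self_mul_const_pow_of_lt_one hρ0.le hρ1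
    have t2 := tendsto_pow_atTop_nhds_zero_of_lt_one hρ0.le hρ1
    have t3 := t1.add t2
    rw [add_zero] at t3
    obtain ⟨J, hJ⟩ := (t3.eventually (gt_mem_nhds (zero_lt_one))).exists
    exact ⟨J, by linarith⟩
  let R := Finset.range (J + 1) ×ˢ Finset.range (J + 1)
  let c : ℕ → ℝ := fun m => (∑ p ∈ R with tdist p = m, tco J p) / 4 ^ J - (if m = 0 then ρ ^ J else 0)
  have hc : ∀ x : ℕ → ℝ, ∑ m ∈ Finset.range (J + 1), c m * x m =
      (∑ p ∈ R, tco J p * x (tdist p)) / 4 ^ J - ρ ^ J * x 0 := by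
    intro x
    simp only [c, sub_mul, Finset.sum_sub_distrib, ite_mul, zero_mul, Finset.sum_ite_eq',
      Finset.mem_range, Nat.succ_pos, if_true]
    congr 1
    have hmaps : ∀ p ∈ R, tdist p ∈ Finset.range (J + 1) := by
      intro p hp
      simp only [R, Finset.mem_product, Finset.mem_range] at hp
      simp only [tdist, Finset.mem_range]
      omega
    rw [← Finset.sum_fiberwise_of_maps_to hmaps, Finset.sum_div]
    refine Finset.sum_congr rfl fun m _ => ?_
    rw [div_mul_eq_mul_div, Finset.sum_mul]
    congr 1
    refine Finset.sum_congr rfl fun p hp => ?_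
    rw [(Finset.mem_filter.1 hp).2]
  have hval : ∀ w : ℂ, ‖w‖ = 1 → ∑ m ∈ Finset.range (J + 1), c m * (w ^ m).re =
      (‖1 - w‖ ^ 2 / 4) ^ J - ρ ^ J := by
    intro w hw
    rw [hc (fun m => (w ^ m).re), tco_sum J w hw, div_pow]
    simp
  refine ⟨J, c, ?_, ?_⟩
  · have hd : ∑ p ∈ R with tdist p = 0, tco J p = ∑ a ∈ Finset.range (J + 1), (J.choose a : ℝ) ^ 2 := by
      rw [Finset.sum_filter, Finset.sum_product]
      refine Finset.sum_congr rfl fun a ha => ?_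
      have : ∀ b, (if tdist (a, b) = 0 then tco J (a, b) else 0) = if a = b then tco J (a, b) else 0 := by
        intro b
        have : tdist (a, b) = 0 ↔ a = b := by simp only [tdist]; omega
        simp only [this]
      simp only [this]
      rw [Finset.sum_ite_eq, if_pos ha, tco, ← two_mul, pow_mul]
      norm_num
      ring
    have hcs := sq_sum_le_card_mul_sum_sq (s := Finset.range (J + 1)) (f := fun a => (J.choose a : ℝ))
    have hs : ∑ a ∈ Finset.range (J + 1), (J.choose a : ℝ) = 2 ^ J := by
      exact_mod_cast Nat.sum_range_choose J
    rw [hs, Finset.card_range, ← pow_mul, mul_comm J 2, pow_mul] at hcs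
    norm_num at hcs
    simp only [c, hd, if_true]
    rw [sub_pos, lt_div_iff₀ (by positivity)]
    have hJ0 : (0:ℝ) < (J:ℝ) + 1 := by positivity
    have h4 : (0:ℝ) < 4 ^ J := by positivity
    have : ((J:ℝ) + 1) * (ρ ^ J * 4 ^ J) < ((J:ℝ) + 1) * ∑ a ∈ Finset.range (J + 1), (J.choose a : ℝ) ^ 2 := by
      refine lt_of_lt_of_le ?_ hcs
      nlinarith
    exact lt_of_mul_lt_mul_left this hJ0.le
  · intro w hw
    rw [hval w hw]
    have hpar : ‖1 - w‖ ^ 2 + ‖w + 1‖ ^ 2 = 4 := by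
      have h1 : w.re ^ 2 + w.im ^ 2 = 1 := by
        have : Complex.normSq w = 1 := by rw [Complex.normSq_eq_norm_sq, hw]; norm_num
        rw [Complex.normSq_apply] at this
        linarith
      rw [← Complex.normSq_eq_norm_sq, ← Complex.normSq_eq_norm_sq, Complex.normSq_apply, Complex.normSq_apply]
      simp
      linarith
    have hρJ : 0 < ρ ^ J := by positivity
    constructor
    · have : (‖1 - w‖ ^ 2 / 4) ^ J ≤ 1 := pow_le_one₀ (by positivity) (by nlinarith [sq_nonneg ‖w + 1‖])
      linarith
    · intro h
      have : (‖1 - w‖ ^ 2 / 4) ^ J ≤ ρ ^ J := by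
        apply pow_le_pow_left₀ (by positivity)
        rw [hρ]
        nlinarith
      linarith

lemma gA_sq_two_le {p : GaussianInt} (hp : Prime p) : 2 ≤ gA p ^ 2 := by
  rw [gA_sq]
  have h1 := gA_pos hp.ne_zero
  have h2 : (0:ℝ) < ((p.re ^ 2 + p.im ^ 2 : ℤ) : ℝ) := by rw [← gA_sq]; positivity
  have h3 : 0 < p.re ^ 2 + p.im ^ 2 := by exact_mod_cast h2
  have h4 : p.re ^ 2 + p.im ^ 2 ≠ 1 := by
    intro h
    apply hp.not_isUnit
    rw [← Zsqrtd.norm_eq_one_iff, Zsqrtd.norm_def]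
    have : p.re * p.re - (-1) * p.im * p.im = 1 := by linarith
    rw [this]; rfl
  have : 2 ≤ p.re ^ 2 + p.im ^ 2 := by omega
  exact_mod_cast this

lemma gL_zero_real {t : ℝ} (ht : 2 < t) : gL 0 t = ((∑' z, gA z ^ (-t) : ℝ) : ℂ) := by
  rw [gL, Complex.ofReal_tsum]
  congr 1; ext z
  rw [gF, pow_zero, one_mul, ← Complex.ofReal_neg, Complex.ofReal_cpow (gA_nonneg _)]

lemma gL_zero_unbounded (M : ℝ) (h : ∀ᶠ t : ℝ in 𝓝[>] 2, ‖gL 0 t‖ ≤ M) : False := by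
  apply not_summable_gA
  refine summable_of_sum_le (c := M) (fun z => Real.rpow_nonneg (gA_nonneg _) _) fun S => ?_
  have ht : Tendsto (fun t : ℝ => ∑ z ∈ S, gA z ^ (-t)) (𝓝[>] 2) (𝓝 (∑ z ∈ S, gA z ^ (-2:ℝ))) := by
    refine tendsto_finsetSum _ fun z _ => ?_
    have hc : ContinuousAt (fun t : ℝ => gA z ^ (-t)) 2 := by
      rcases eq_or_ne z 0 with rfl | hz
      · have : (fun t : ℝ => gA 0 ^ (-t)) =ᶠ[𝓝 2] fun _ => 0 := by
          filter_upwards [eventually_ne_nhds (show (2:ℝ) ≠ 0 by norm_num)] with t ht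
          exact gA_rpow_zero ht
        exact continuousAt_const.congr this.symm
      · exact continuousAt_const.rpow continuousAt_neg (Or.inl (gA_pos hz).ne')
    exact hc.tendsto.mono_left nhdsWithin_le_nhds
  refine le_of_tendsto ht ?_
  filter_upwards [h, self_mem_nhdsWithin] with t hM ht2
  refine le_trans ?_ hM
  rw [gL_zero_real ht2, Complex.norm_real]
  refine le_trans ?_ (le_abs_self _)
  exact (summable_gA ht2).sum_le_tsum S fun z _ => Real.rpow_nonneg (gA_nonneg _) _

lemma gPrime_exists (δ : ℝ) (hδ : 0 < δ) (hδ1 : δ ≤ 1) :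
    ∃ p : GaussianInt, Prime p ∧ gA p ^ 2 ≠ 2 ∧ ‖gChi p + 1‖ < δ := by
  by_contra hcon
  push Not at hcon
  obtain ⟨n, c, hc0, hc⟩ := trig_exists δ hδ hδ1
  let h : GP × ℕ → ℝ := fun q => 2 * (gl (q.1, 0) * gA q.1.1 ^ (-4:ℝ) * (1/2) ^ q.2)
  have hh : Summable h := by
    apply Summable.mul_left
    have h1 : Summable fun p : GP => gl (p, 0) * gA p.1 ^ (-4:ℝ) := by
      have := (gl_summable (t := 4) (by norm_num)).comp_injective (i := fun p : GP => (p, 0))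
        (fun a b h => (Prod.ext_iff.1 h).1)
      refine this.congr fun p => ?_
      simp [gq]
    have h2 : Summable fun e : ℕ => (1/2 : ℝ) ^ e := summable_geometric_two
    exact h1.mul_of_nonneg h2 (fun p => mul_nonneg (gl_nonneg _) (Real.rpow_nonneg (gA_nonneg _) _))
      (fun e => by positivity)
  obtain ⟨K, hK⟩ := gLog_mono c (n + 1) (∑' q, h q) (by
    intro t ht _
    have hs : HasSum (fun q => ∑ m ∈ Finset.range (n + 1), c m * (gl q * gA (gq q) ^ (-t) * (gChi (gq q) ^ m).re))
        (∑ m ∈ Finset.range (n + 1), c m * (gB m t).re) :=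
      hasSum_sum fun m _ => (gB_re_hasSum m ht).mul_left (c m)
    refine hasSum_le (fun q => ?_) hs hh.hasSum
    have e1 : ∑ m ∈ Finset.range (n + 1), c m * (gl q * gA (gq q) ^ (-t) * (gChi (gq q) ^ m).re) =
        gl q * gA (gq q) ^ (-t) * ∑ m ∈ Finset.range (n + 1), c m * (gChi (gq q) ^ m).re := by
      rw [Finset.mul_sum]
      exact Finset.sum_congr rfl fun m _ => by ring
    rw [e1]
    obtain ⟨f1, f0⟩ := hc (gChi (gq q)) (norm_gChi (gq_ne q))
    have hg : 0 ≤ gl q * gA (gq q) ^ (-t) := mul_nonneg (gl_nonneg q) (Real.rpow_nonneg (gA_nonneg _) _)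
    have hhq : 0 ≤ h q := by
      have := gl_nonneg (q.1, 0)
      have := gA_nonneg q.1.1
      simp only [h]; positivity
    obtain ⟨p, e⟩ := q
    by_cases hbad : e = 0 ∧ gA p.1 ^ 2 ≠ 2
    · have h0 : δ ≤ ‖gChi (gq (p, e)) + 1‖ := by
        have : gq (p, e) = p.1 := by simp [gq, hbad.1]
        rw [this]
        exact hcon p.1 p.2.1 hbad.2
      exact (mul_nonpos_of_nonneg_of_nonpos hg (f0 h0)).trans hhq
    · refine (mul_le_of_le_one_right hg f1).trans ?_
      have hN := gA_sq_two_le p.2.1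
      have hl := gl_nonneg (p, 0)
      have hle : gA (gq (p, e)) ^ (-t) ≤ ((gA p.1 ^ 2) ^ (e + 1))⁻¹ := by
        refine (Real.rpow_le_rpow_of_exponent_le (gA_one_le (gq_ne _)) (show -t ≤ -2 by linarith)).trans ?_
        rw [Real.rpow_neg (gA_nonneg _), show (2:ℝ) = ((2:ℕ):ℝ) by norm_num, Real.rpow_natCast]
        have : gA (gq (p, e)) = gA p.1 ^ (e + 1) := by simp [gq, gA]
        rw [this, ← pow_mul, ← pow_mul, mul_comm]
      have e4 : gA p.1 ^ (-4:ℝ) = ((gA p.1 ^ 2) ^ 2)⁻¹ := by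
        rw [Real.rpow_neg (gA_nonneg _), show (4:ℝ) = ((4:ℕ):ℝ) by norm_num, Real.rpow_natCast, ← pow_mul]
      have hle2 : ((gA p.1 ^ 2) ^ (e + 1))⁻¹ ≤ 2 * (((gA p.1 ^ 2) ^ 2)⁻¹ * (1/2) ^ e) := by
        set N := gA p.1 ^ 2
        have hNp : 0 < N := by linarith
        cases e with
        | zero =>
          have : N = 2 := by
            by_contra h
            exact hbad ⟨rfl, h⟩
          rw [this]; norm_num
        | succ e =>
          have : 2 * ((N ^ 2)⁻¹ * (1/2) ^ (e + 1)) = (N ^ 2 * 2 ^ e)⁻¹ := by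
            rw [mul_inv, one_div, inv_pow, pow_succ 2 e, mul_inv]
            ring
          rw [this]
          apply inv_anti₀ (by positivity)
          rw [show e + 1 + 1 = 2 + e by ring, pow_add]
          gcongr
      have hgl : gl (p, e) = gl (p, 0) := rfl
      simp only [h]
      rw [hgl, e4]
      calc gl (p, 0) * gA (gq (p, e)) ^ (-t) ≤ gl (p, 0) * (2 * (((gA p.1 ^ 2) ^ 2)⁻¹ * (1/2) ^ e)) := by
            gcongr
            exact hle.trans hle2
        _ = _ := by ring)
  -- bounded
  have ht : Tendsto (fun t => ∑ m ∈ Finset.range n, c (m + 1) * gLog (m + 1) t) (𝓝[>] 2)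
      (𝓝 (∑ m ∈ Finset.range n, c (m + 1) * Real.log ‖gQ (m + 1) 2‖)) :=
    tendsto_finsetSum _ fun m _ => (gLog_tendsto m).const_mul _
  set ℓ := ∑ m ∈ Finset.range n, c (m + 1) * Real.log ‖gQ (m + 1) 2‖
  have hev := ht.eventually (lt_mem_nhds (show ℓ - 1 < ℓ by linarith))
  have h3 : ∀ᶠ t : ℝ in 𝓝[>] 2, t ≤ 3 :=
    nhdsWithin_le_nhds (eventually_le_nhds (by norm_num))
  refine gL_zero_unbounded (Real.exp ((K - (ℓ - 1)) / c 0)) ?_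
  filter_upwards [hev, h3, self_mem_nhdsWithin] with t h1 h3 h2
  have hk := hK t h2 h3
  rw [Finset.sum_range_succ'] at hk
  rw [← Real.log_le_iff_le_exp (norm_pos_iff.2 (gL_ne 0 h2)), le_div_iff₀ hc0]
  change gLog 0 t * c 0 ≤ _
  linarith
end

lemma gA_sq_norm (z : GaussianInt) : gA z ^ 2 = ((Zsqrtd.norm z : ℤ) : ℝ) := by
  rw [gA_sq, Zsqrtd.norm_def]
  congr 1
  ring

lemma gA_star (z : GaussianInt) : gA (star z) = gA z := by
  rw [gA, GaussianInt.toComplex_star, RCLike.norm_conj, gA]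

lemma gChi_star (z : GaussianInt) : gChi (star z) = (starRingEnd ℂ) (gChi z) := by
  rw [gChi, gA_star, GaussianInt.toComplex_star, gChi, map_pow, map_div₀, Complex.conj_ofReal]

lemma norm_gChi_star_add (z : GaussianInt) : ‖gChi (star z) + 1‖ = ‖gChi z + 1‖ := by
  rw [gChi_star, ← RCLike.norm_conj (gChi z + 1), map_add, map_one]

lemma gChi_close {p : GaussianInt} (hp : Prime p) {δ : ℝ} (hδ : ‖gChi p + 1‖ < δ) (j : ℕ) :
    ∀ z : GaussianInt, Zsqrtd.norm z = Zsqrtd.norm p ^ j → ‖gChi z - (-1) ^ j‖ ≤ j * δ := by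
  have hN0 : Zsqrtd.norm p ≠ 0 := by
    intro h
    have h2 := gA_sq_norm p
    have := gA_pos hp.ne_zero
    rw [h] at h2
    simp at h2
    linarith
  induction j with
  | zero =>
    intro z hz
    have h1 : gA z = 1 := by
      have := gA_sq_norm z
      rw [hz] at this
      have h0 := gA_nonneg z
      simp at this
      rcases this with h | h
      · exact h
      · linarith
    rw [gChi_unit h1]; simp
  | succ j ih =>
    intro z hz
    have key : ∀ q w : GaussianInt, Zsqrtd.norm q = Zsqrtd.norm p → ‖gChi q + 1‖ < δ → q ≠ 0 →
        z = q * w → ‖gChi z - (-1) ^ (j+1)‖ ≤ ((j+1 : ℕ) : ℝ) * δ := by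
      intro q w hq hqd hq0 hzw
      have hw : Zsqrtd.norm w = Zsqrtd.norm p ^ j := by
        rw [hzw, Zsqrtd.norm_mul, hq, pow_succ'] at hz
        exact mul_left_cancel₀ hN0 hz
      have h1 := ih w hw
      rw [hzw, gChi_mul]
      have : gChi q * gChi w - (-1) ^ (j+1) = gChi q * (gChi w - (-1)^j) + (gChi q + 1) * (-1)^j := by
        ring
      rw [this]
      refine (norm_add_le _ _).trans ?_
      rw [norm_mul, norm_mul, norm_gChi hq0]
      push_cast
      simp only [norm_pow, norm_neg, norm_one, one_pow]
      linarith
    have hd : p ∣ z * star z := by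
      rw [← Zsqrtd.norm_eq_mul_conj, hz]
      push_cast
      rw [Zsqrtd.norm_eq_mul_conj]
      exact dvd_pow (dvd_mul_right _ _) (Nat.succ_ne_zero _)
    rcases hp.dvd_or_dvd hd with ⟨w, hw⟩ | ⟨w, hw⟩
    · exact key p w rfl hδ hp.ne_zero hw
    · refine key (star p) (star w) (Zsqrtd.norm_conj p) ?_ ?_ ?_
      · rw [norm_gChi_star_add]; exact hδ
      · simpa using hp.ne_zero
      · have := congrArg star hw
        rw [star_star, star_mul'] at this
        exact this

lemma gChi_eq_one_of_axis {p : GaussianInt} (hp : p ≠ 0) (h : p.re = 0 ∨ p.im = 0) :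
    gChi p = 1 := by
  have h1 := gA_pos hp
  have h2 : (gA p : ℂ) ^ 2 = ((p.re : ℂ) ^ 2 + (p.im : ℂ) ^ 2) := by
    have := gA_sq p
    have h3 := congrArg (fun x : ℝ => (x : ℂ)) this
    push_cast at h3
    exact h3
  have h4 : (p : ℂ) ^ 4 = (gA p : ℂ) ^ 4 := by
    rw [show (gA p : ℂ) ^ 4 = ((gA p : ℂ) ^ 2) ^ 2 by ring, h2, GaussianInt.toComplex_def]
    rcases h with h | h
    · rw [h]; push_cast
      have : Complex.I ^ 4 = 1 := Complex.I_pow_four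
      linear_combination (p.im : ℂ) ^ 4 * this
    · rw [h]; push_cast; ring
  rw [gChi, div_pow, h4, div_self]
  exact pow_ne_zero _ (by exact_mod_cast h1.ne')

lemma gUnit_of_dvd {c : GaussianInt} (h : IsUnit c) : Zsqrtd.norm c = 1 :=
  (Zsqrtd.norm_eq_one_iff' (by norm_num) c).2 h

lemma not_dvd_star {p : GaussianInt} (hp : Prime p) (h2 : gA p ^ 2 ≠ 2)
    (hχ : ‖gChi p + 1‖ < 1) : ¬ p ∣ star p := by
  have hax : ¬ (p.re = 0 ∨ p.im = 0) := by
    intro h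
    rw [gChi_eq_one_of_axis hp.ne_zero h] at hχ
    norm_num at hχ
  rintro ⟨c, hc⟩
  have hdiag : ∀ s : ℤ, s ^ 2 = 1 → p.im = s * p.re → False := by
    intro s hs h
    have hf : p = (⟨p.re, 0⟩ : GaussianInt) * ⟨1, s⟩ := by
      ext
      · simp
      · simp [h]; ring
    rcases hp.irreducible.isUnit_or_isUnit hf with hu | hu
    · have := gUnit_of_dvd hu
      rw [Zsqrtd.norm_def] at this
      simp at this
      apply h2
      rw [gA_sq, h]
      have : (p.re ^ 2 + (s * p.re) ^ 2 : ℤ) = 2 := by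
        linear_combination 2 * this + p.re ^ 2 * hs
      rw [this]; norm_num
    · have := gUnit_of_dvd hu
      rw [Zsqrtd.norm_def] at this
      simp at this
      rw [this] at hs
      norm_num at hs
  have hre := congrArg Zsqrtd.re hc
  have him := congrArg Zsqrtd.im hc
  simp at hre him
  have hn : Zsqrtd.norm c = 1 := by
    have := congrArg Zsqrtd.norm hc
    rw [Zsqrtd.norm_conj, Zsqrtd.norm_mul] at this
    have hN0 : Zsqrtd.norm p ≠ 0 := by
      intro h
      have h2 := gA_sq_norm p
      have := gA_pos hp.ne_zero
      rw [h] at h2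
      simp at h2
      linarith
    exact mul_left_cancel₀ hN0 (by rw [← this, mul_one])
  rw [Zsqrtd.norm_def] at hn
  have hb1 : -1 ≤ c.re ∧ c.re ≤ 1 := by constructor <;> nlinarith [mul_self_nonneg c.im, mul_self_nonneg c.re]
  have hb2 : -1 ≤ c.im ∧ c.im ≤ 1 := by constructor <;> nlinarith [mul_self_nonneg c.im, mul_self_nonneg c.re]
  obtain ⟨a1, a2⟩ := hb1
  obtain ⟨b1, b2⟩ := hb2
  generalize c.re = x at *
  generalize c.im = y at *
  interval_cases x <;> interval_cases y <;> simp at hn hre him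
  · exact hax (by omega)
  · exact hdiag 1 (by norm_num) (by omega)
  · exact hdiag (-1) (by norm_num) (by omega)
  · exact hax (by omega)

lemma latticeR_gt {p : GaussianInt} (hp : Prime p) (hnd : ¬ p ∣ star p) (E n : ℕ)
    (hn : (n : ℤ) = Zsqrtd.norm p ^ E) : E < latticeR n := by
  have hs0 : star p ≠ 0 := by simpa using hp.ne_zero
  have aux : ∀ a b : ℕ, a < b → b ≤ E →
      p ^ a * star p ^ (E - a) ≠ p ^ b * star p ^ (E - b) := by
    intro a b hab hb h
    have e1 : E - a = (E - b) + (b - a) := by omega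
    have e2 : p ^ b = p ^ a * p ^ (b - a) := by rw [← pow_add]; congr 1; omega
    rw [e1, e2, pow_add] at h
    have h3 : (p ^ a * star p ^ (E - b)) * star p ^ (b - a) =
        (p ^ a * star p ^ (E - b)) * p ^ (b - a) := by
      rw [mul_assoc, h]; ring
    have h4 := mul_left_cancel₀
      (mul_ne_zero (pow_ne_zero _ hp.ne_zero) (pow_ne_zero _ hs0)) h3
    apply hnd
    apply hp.dvd_of_dvd_pow (n := b - a)
    rw [h4]
    exact dvd_pow_self _ (by omega)
  have : (Finset.range (E + 1)).card ≤ (latticeCircle n).card := by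
    apply Finset.card_le_card_of_injOn
      (fun a => ((p ^ a * star p ^ (E - a)).re, (p ^ a * star p ^ (E - a)).im))
    · intro a ha
      simp only [Finset.coe_range, Set.mem_Iio] at ha
      have hN : Zsqrtd.norm (p ^ a * star p ^ (E - a)) = n := by
        have hpw : ∀ (q : GaussianInt) (m : ℕ), Zsqrtd.norm (q ^ m) = Zsqrtd.norm q ^ m := by
          intro q m
          exact map_pow (Zsqrtd.normMonoidHom (d := -1)) q m
        rw [Zsqrtd.norm_mul, hpw, hpw, Zsqrtd.norm_conj, ← pow_add, hn]
        congr 1; omega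
      show ((p ^ a * star p ^ (E - a)).re, (p ^ a * star p ^ (E - a)).im) ∈ _
      generalize p ^ a * star p ^ (E - a) = z at hN ⊢
      rw [Zsqrtd.norm_def] at hN
      have habs : ∀ x : ℤ, x ≤ x ^ 2 ∧ -x ≤ x ^ 2 := by
        intro x
        rcases le_total 0 x with h | h
        · rcases h.eq_or_lt with h | h
          · subst h; simp
          · constructor <;> nlinarith
        · rcases h.eq_or_lt with h | h
          · subst h; simp
          · constructor <;> nlinarith
      have h1 := habs z.re
      have h2 := habs z.im
      have h3 := sq_nonneg z.re
      have h4 := sq_nonneg z.im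
      have h5 : z.re ^ 2 + z.im ^ 2 = n := by rw [← hN]; ring
      simp only [latticeCircle, Finset.coe_filter, Finset.mem_product, Finset.mem_Icc,
        Set.mem_ofPred_eq]
      refine ⟨⟨⟨?_, ?_⟩, ?_, ?_⟩, h5⟩ <;> omega
    · intro a ha b hb hab
      simp only [Finset.coe_range, Set.mem_Iio] at ha hb
      simp only [Prod.mk.injEq] at hab
      have he : p ^ a * star p ^ (E - a) = p ^ b * star p ^ (E - b) :=
        Zsqrtd.ext hab.1 hab.2
      rcases lt_trichotomy a b with h | h | h
      · exact absurd he (aux a b h (by omega))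
      · exact h
      · exact absurd he.symm (aux b a h (by omega))
  rw [Finset.card_range] at this
  exact this

lemma gArg_close {z : GaussianInt} (hz : z ≠ 0) {ε : ℝ} (h : |Complex.arg (gChi z)| < 4 * ε) :
    ∃ m : ℤ, |Complex.arg (z : ℂ) - m * (Real.pi / 2)| < ε := by
  have h0 := gA_pos hz
  have h1 : gChi z = Complex.exp ((4 * Complex.arg (z : ℂ) : ℝ) * Complex.I) := by
    have hA : (gA z : ℂ) ≠ 0 := by exact_mod_cast h0.ne'
    have h2 : (z : ℂ) / (gA z : ℂ) = Complex.exp (Complex.arg (z : ℂ) * Complex.I) := by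
      rw [div_eq_iff hA, mul_comm]
      exact (Complex.norm_mul_exp_arg_mul_I _).symm
    rw [gChi, h2, ← Complex.exp_nat_mul]
    congr 1
    push_cast; ring
  have h2 : gChi z = Complex.exp ((Complex.arg (gChi z)) * Complex.I) := by
    have := Complex.norm_mul_exp_arg_mul_I (gChi z)
    rw [norm_gChi hz] at this
    simpa using this.symm
  rw [h1] at h2
  obtain ⟨m, hm⟩ := Complex.exp_eq_exp_iff_exists_int.1 h2
  rw [← h1] at hm
  refine ⟨m, ?_⟩
  have h3 := congrArg Complex.im hm
  simp at h3
  have h4 : Complex.arg (z : ℂ) - m * (Real.pi / 2) = Complex.arg (gChi z) / 4 := by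
    linarith
  rw [h4, abs_div]
  norm_num
  linarith

lemma latticeTheta_close {ε : ℝ} (u : ℤ × ℤ) (m : ℤ)
    (h : |Complex.arg ((u.1 : ℂ) + (u.2 : ℂ) * Complex.I) - m * (Real.pi / 2)| < ε) :
    ∃ t : Fin 4, ∃ j : ℤ,
      |latticeTheta u - (t : ℝ) * Real.pi / 2 - 2 * Real.pi * j| < ε := by
  have hm := Int.emod_add_mul_ediv m 4
  have hm0 := Int.emod_nonneg m (b := 4) (by norm_num)
  have hm1 := Int.emod_lt_of_pos m (b := 4) (by norm_num)
  obtain ⟨t, ht⟩ := Int.eq_ofNat_of_zero_le hm0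
  have ht4 : t < 4 := by omega
  have hmr : (m : ℝ) = t + 4 * ((m / 4 : ℤ) : ℝ) := by
    rw [ht] at hm
    exact_mod_cast hm.symm
  refine ⟨⟨t, ht4⟩, ?_⟩
  rw [hmr] at h
  unfold latticeTheta
  split_ifs
  · refine ⟨m / 4, ?_⟩
    convert h using 2
    simp only []
    ring
  · refine ⟨m / 4 + 1, ?_⟩
    convert h using 2
    push_cast
    ring

/-- Cilleruelo: for every `ε > 0` and every `k`, there is a circle `x² + y² = n` with
more than `k` lattice points, all of which lie within angular distance `ε` (mod `2π`)
of one of the four half-axis directions `t π/2`, `t ∈ {0, 1, 2, 3}`. -/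
theorem cilleruelo_badly_distributed (ε : ℝ) (hε : 0 < ε) (k : ℕ) :
    ∃ n : ℕ, 0 < n ∧ k < latticeR n ∧
      ∀ u : ℤ × ℤ, u.1 ^ 2 + u.2 ^ 2 = (n : ℤ) →
        ∃ t : Fin 4, ∃ j : ℤ,
          |latticeTheta u - (t : ℝ) * Real.pi / 2 - 2 * Real.pi * j| < ε := by
  have hc : ContinuousAt Complex.arg 1 :=
    Complex.continuousAt_arg (by simp)
  obtain ⟨η, hη, hη'⟩ := Metric.continuousAt_iff.1 hc (4 * ε) (by linarith)
  set E := 2 * k with hE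
  have hE1 : (0:ℝ) < (E:ℝ) + 1 := by positivity
  obtain ⟨p, hp, hp2, hpδ⟩ := gPrime_exists (min 1 (η / ((E:ℝ) + 1)))
    (lt_min one_pos (by positivity)) (min_le_left _ _)
  have hnd := not_dvd_star hp hp2 (hpδ.trans_le (min_le_left _ _))
  have hδ2 := hpδ.trans_le (min_le_right _ _)
  have hNpos : 0 < Zsqrtd.norm p := by
    have h2 := gA_sq_norm p
    have := gA_pos hp.ne_zero
    have h3 : (0:ℝ) < (Zsqrtd.norm p : ℤ) := by rw [← h2]; positivity
    exact_mod_cast h3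
  have hn : (((Zsqrtd.norm p).toNat ^ E : ℕ) : ℤ) = Zsqrtd.norm p ^ E := by
    push_cast
    rw [Int.toNat_of_nonneg hNpos.le]
  refine ⟨(Zsqrtd.norm p).toNat ^ E, ?_, ?_, ?_⟩
  · have : 0 < (Zsqrtd.norm p).toNat := by omega
    positivity
  · exact lt_of_le_of_lt (by omega) (latticeR_gt hp hnd E _ hn)
  · intro u hu
    rw [hn] at hu
    set z : GaussianInt := ⟨u.1, u.2⟩ with hzdef
    have hzN : Zsqrtd.norm z = Zsqrtd.norm p ^ E := by
      rw [← hu, Zsqrtd.norm_def]; simp [hzdef]; ring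
    have hz0 : z ≠ 0 := by
      intro h
      rw [h, Zsqrtd.norm_zero] at hzN
      have := pow_pos hNpos E
      omega
    have h1 := gChi_close hp hδ2 E z hzN
    have hev : ((-1 : ℂ)) ^ E = 1 := by rw [hE, pow_mul]; norm_num
    rw [hev] at h1
    have h2 : (E : ℝ) * (η / ((E:ℝ) + 1)) < η := by
      rw [mul_div_assoc', div_lt_iff₀ hE1]; nlinarith
    have h3 := @hη' (gChi z) (by rw [dist_eq_norm]; linarith)
    rw [Complex.arg_one, Real.dist_eq, sub_zero] at h3
    obtain ⟨m, hm⟩ := gArg_close hz0 h3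
    apply latticeTheta_close u m
    rwa [hzdef, GaussianInt.toComplex_def'] at hm
end

section
/- Let k be a nonzero integer divisible by 4, let p be a prime with p ≡ 1 (mod 4), write p = a² + b² with a, b ∈ ℤ and set θ_p = arg(a + ib). Then for every l ≥ 1, |S(p^l, k)| = 4·| Σ_{j=0}^{l} exp(i·k·(l − 2j)·θ_p) |. In particular |S(p,k)| = 8·|cos(k·θ_p)| and |S(p^l,k)| ≤ 4·(l+1). -/
/-- The exponential sum `S(m, k) = Σ_{u ∈ ℤ², |u|² = m} exp(i k θ_u)`. -/
noncomputable def latticeS (m : ℕ) (k : ℤ) : ℂ :=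
  ∑ u ∈ latticeCircle m, Complex.exp ((k : ℂ) * (latticeTheta u : ℂ) * Complex.I)

open GaussianInt in
theorem aux_theta (z : GaussianInt) (hz : z ≠ 0) (k : ℤ) :
    Complex.exp ((k : ℂ) * (latticeTheta (z.re, z.im) : ℂ) * Complex.I)
      = (toComplex z / (‖toComplex z‖ : ℂ)) ^ k := by
  have hz' : toComplex z ≠ 0 := by simpa using hz
  have hn : (‖toComplex z‖ : ℂ) ≠ 0 := by simpa using hz'
  have h1 : Complex.exp ((Complex.arg (toComplex z) : ℂ) * Complex.I)
      = toComplex z / (‖toComplex z‖ : ℂ) := by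
    rw [eq_div_iff hn, mul_comm]; exact Complex.norm_mul_exp_arg_mul_I _
  have h2 : Complex.exp ((latticeTheta (z.re, z.im) : ℂ) * Complex.I)
      = toComplex z / (‖toComplex z‖ : ℂ) := by
    rw [← h1]
    unfold latticeTheta
    split_ifs
    · simp only [← toComplex_def]
    · simp only [← toComplex_def]
      push_cast
      rw [add_mul, Complex.exp_add, Complex.exp_two_pi_mul_I, mul_one]
  rw [mul_assoc, Complex.exp_int_mul, h2]

theorem aux_mem (z : GaussianInt) (n : ℕ) :
    (z.re, z.im) ∈ latticeCircle n ↔ Zsqrtd.norm z = n := by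
  unfold latticeCircle
  simp only [Finset.mem_filter, Finset.mem_product, Finset.mem_Icc, Zsqrtd.norm_def]
  constructor
  · rintro ⟨-, h⟩; linarith
  · intro h
    have h' : z.re ^ 2 + z.im ^ 2 = n := by linarith
    refine ⟨⟨⟨?_, ?_⟩, ⟨?_, ?_⟩⟩, h'⟩ <;>
    nlinarith [Int.le_self_sq z.re, Int.le_self_sq z.im, Int.le_self_sq (-z.re),
      Int.le_self_sq (-z.im), sq_nonneg z.re, sq_nonneg z.im]

def auxI : GaussianInt := ⟨0, 1⟩

def auxZ (q : GaussianInt) (l : ℕ) (x : ℕ × ℕ) : GaussianInt :=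
  auxI ^ x.1 * (q ^ (l - x.2) * star q ^ x.2)

theorem aux_unit (z : GaussianInt) (h : Zsqrtd.norm z = 1) : ∃ e < 4, z = auxI ^ e := by
  obtain ⟨x, y⟩ := z
  rw [Zsqrtd.norm_def] at h
  simp only at h
  have hx : -1 ≤ x ∧ x ≤ 1 := by constructor <;> nlinarith [mul_self_nonneg y]
  have hy : -1 ≤ y ∧ y ≤ 1 := by constructor <;> nlinarith [mul_self_nonneg x]
  obtain ⟨a1, a2⟩ := hx
  obtain ⟨b1, b2⟩ := hy
  interval_cases x <;> interval_cases y <;> simp at h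
  · exact ⟨2, by norm_num, by decide⟩
  · exact ⟨3, by norm_num, by decide⟩
  · exact ⟨1, by norm_num, by decide⟩
  · exact ⟨0, by norm_num, by decide⟩

theorem aux_irr (q : GaussianInt) (p : ℕ) (hp : p.Prime) (hq : Zsqrtd.norm q = p) : Prime q := by
  rw [← irreducible_iff_prime]
  constructor
  · intro hu
    rw [← Zsqrtd.norm_eq_one_iff, hq] at hu
    simp at hu
    exact hp.one_lt.ne' hu
  · intro x y hxy
    rw [← Zsqrtd.norm_eq_one_iff, ← Zsqrtd.norm_eq_one_iff]
    have : x.norm.natAbs * y.norm.natAbs = p := by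
      rw [← Int.natAbs_mul, ← Zsqrtd.norm_mul, ← hxy, hq]; simp
    rcases (Nat.dvd_prime hp).1 ⟨_, this.symm⟩ with h | h
    · exact Or.inl h
    · right
      rw [h] at this
      exact Nat.eq_of_mul_eq_mul_left hp.pos (by simpa using this)

theorem aux_surj (q : GaussianInt) (p : ℕ) (hp : p.Prime) (hq : Zsqrtd.norm q = p) (l : ℕ) :
    ∀ z : GaussianInt, Zsqrtd.norm z = (p : ℤ) ^ l → ∃ e < 4, ∃ j ≤ l, z = auxZ q l (e, j) := by
  have hp0 : (p : ℤ) ≠ 0 := by exact_mod_cast hp.ne_zero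
  induction l with
  | zero =>
    intro z hz
    obtain ⟨e, he, h⟩ := aux_unit z (by simpa using hz)
    exact ⟨e, he, 0, le_rfl, by simp [auxZ, h]⟩
  | succ l ih =>
    intro z hz
    have hd : q ∣ z * star z := by
      rw [← Zsqrtd.norm_eq_mul_conj, hz, ← hq]
      push_cast
      rw [Zsqrtd.norm_eq_mul_conj]
      exact dvd_pow (Dvd.intro _ rfl) (by omega)
    rcases (aux_irr q p hp hq).dvd_or_dvd hd with ⟨w, hw⟩ | ⟨w, hw⟩
    · have : Zsqrtd.norm w = (p : ℤ) ^ l := by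
        rw [hw, Zsqrtd.norm_mul, hq, pow_succ'] at hz
        exact mul_left_cancel₀ hp0 hz
      obtain ⟨e, he, j, hj, h⟩ := ih w this
      refine ⟨e, he, j, by omega, ?_⟩
      rw [hw, h]
      simp only [auxZ]
      rw [show l + 1 - j = (l - j) + 1 by omega]
      ring
    · have hw' : z = star q * star w := by
        rw [← star_star z, hw, star_mul, mul_comm]
      have : Zsqrtd.norm (star w) = (p : ℤ) ^ l := by
        rw [hw', Zsqrtd.norm_mul, Zsqrtd.norm_conj, hq, pow_succ'] at hz
        exact mul_left_cancel₀ hp0 hz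
      obtain ⟨e, he, j, hj, h⟩ := ih _ this
      refine ⟨e, he, j + 1, by omega, ?_⟩
      rw [hw', h]
      simp only [auxZ]
      rw [show l + 1 - (j + 1) = l - j by omega]
      ring

theorem aux_ndvd (q : GaussianInt) (p : ℕ) (hp : p.Prime) (hp1 : p % 4 = 1)
    (hq : Zsqrtd.norm q = p) : ¬ q ∣ star q := by
  intro h
  have h2 : q ∣ ((2 * q.re : ℤ) : GaussianInt) := by
    have : ((2 * q.re : ℤ) : GaussianInt) = q + star q := by
      ext <;> simp; ring
    rw [this]; exact dvd_add dvd_rfl h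
  obtain ⟨w, hw⟩ := h2
  have h3 := congrArg Zsqrtd.norm hw
  rw [Zsqrtd.norm_mul, hq, Zsqrtd.norm_intCast] at h3
  have hpp : Prime (p : ℤ) := Nat.prime_iff_prime_int.1 hp
  have h4 : (p : ℤ) ∣ q.re := by
    have : (p : ℤ) ∣ 2 * q.re := by
      rcases hpp.dvd_or_dvd (Dvd.intro _ h3.symm) with h | h <;> exact h
    rcases hpp.dvd_or_dvd this with h | h
    · exfalso
      have : p ∣ 2 := by exact_mod_cast h
      have := (Nat.prime_dvd_prime_iff_eq hp Nat.prime_two).1 this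
      omega
    · exact h
  have hq' : q.re * q.re + q.im * q.im = p := by
    rw [← hq, Zsqrtd.norm_def]; ring
  have h5 : (p : ℤ) ∣ q.im := by
    have : (p : ℤ) ∣ q.im * q.im := by
      rw [show q.im * q.im = p - q.re * q.re by linarith]
      exact dvd_sub dvd_rfl (h4.mul_left _)
    rcases hpp.dvd_or_dvd this with h | h <;> exact h
  obtain ⟨x, hx⟩ := h4
  obtain ⟨y, hy⟩ := h5
  have h6 : (p : ℤ) * (p * (x * x + y * y)) = p * 1 := by
    rw [hx, hy] at hq'; linarith
  have h7 := mul_left_cancel₀ hpp.ne_zero h6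
  exact hpp.not_isUnit (IsUnit.of_mul_eq_one _ h7)

theorem aux_normI : Zsqrtd.norm auxI = 1 := by decide

theorem aux_unitI (e : ℕ) : IsUnit (auxI ^ e) := by
  apply IsUnit.pow
  rw [← Zsqrtd.norm_eq_one_iff, aux_normI]; rfl

theorem aux_lt (q : GaussianInt) (p : ℕ) (hp : p.Prime) (hp1 : p % 4 = 1)
    (hq : Zsqrtd.norm q = p) (l e j e' j' : ℕ) (hj' : j' ≤ l) (hlt : j < j') :
    auxZ q l (e, j) ≠ auxZ q l (e', j') := by
  intro h
  have hP := aux_irr q p hp hq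
  have hs0 : star q ≠ 0 := by simpa using hP.ne_zero
  simp only [auxZ] at h
  rw [show l - j = (l - j') + (j' - j - 1) + 1 by omega] at h
  have h1 : (q ^ (l - j') * star q ^ j) * (auxI ^ e * q ^ (j' - j - 1) * q)
      = (q ^ (l - j') * star q ^ j) * (auxI ^ e' * star q ^ (j' - j)) := by
    have : star q ^ j' = star q ^ j * star q ^ (j' - j) := by
      rw [← pow_add]; congr 1; omega
    rw [this] at h
    linear_combination h
  have h2 := mul_left_cancel₀ (mul_ne_zero (pow_ne_zero _ hP.ne_zero) (pow_ne_zero _ hs0)) h1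
  have h3 : q ∣ auxI ^ e' * star q ^ (j' - j) := Dvd.intro_left _ h2
  rw [(aux_unitI e').dvd_mul_left] at h3
  exact aux_ndvd q p hp hp1 hq (hP.dvd_of_dvd_pow h3)

theorem aux_inj (q : GaussianInt) (p : ℕ) (hp : p.Prime) (hp1 : p % 4 = 1)
    (hq : Zsqrtd.norm q = p) (l e j e' j' : ℕ) (hj : j ≤ l) (hj' : j' ≤ l) (he : e < 4)
    (he' : e' < 4) (h : auxZ q l (e, j) = auxZ q l (e', j')) : e = e' ∧ j = j' := by
  have hP := aux_irr q p hp hq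
  have hs0 : star q ≠ 0 := by simpa using hP.ne_zero
  rcases lt_trichotomy j j' with hl | hl | hl
  · exact absurd h (aux_lt q p hp hp1 hq l e j e' j' hj' hl)
  · subst hl
    refine ⟨?_, rfl⟩
    have h2 := mul_right_cancel₀
      (mul_ne_zero (pow_ne_zero _ hP.ne_zero) (pow_ne_zero _ hs0)) h
    simp only at h2
    clear h
    interval_cases e <;> interval_cases e' <;> first | rfl | (exfalso; revert h2; decide)
  · exact absurd h.symm (aux_lt q p hp hp1 hq l e' j' e j hj hl)

theorem aux_norm (q : GaussianInt) (p : ℕ) (hq : Zsqrtd.norm q = p) (l e j : ℕ) (hj : j ≤ l) :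
    Zsqrtd.norm (auxZ q l (e, j)) = (p : ℤ) ^ l := by
  have hpow : ∀ (z : GaussianInt) (n : ℕ), Zsqrtd.norm (z ^ n) = Zsqrtd.norm z ^ n :=
    fun z n => map_pow Zsqrtd.normMonoidHom z n
  simp only [auxZ, Zsqrtd.norm_mul, hpow, Zsqrtd.norm_conj, hq, aux_normI]
  rw [one_pow, one_mul, ← pow_add]; congr 1; omega

open GaussianInt in
theorem aux_val (q : GaussianInt) (hq0 : q ≠ 0) (k : ℤ) (h4 : 4 ∣ k) (l e j : ℕ) (hj : j ≤ l) :
    (toComplex (auxZ q l (e, j)) / (‖toComplex (auxZ q l (e, j))‖ : ℂ)) ^ k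
    = Complex.exp ((k : ℂ) * ((l : ℂ) - 2 * (j : ℂ)) *
            (Complex.arg (toComplex q) : ℂ) * Complex.I) := by
  have hz' : toComplex q ≠ 0 := by simpa using hq0
  have hn : (‖toComplex q‖ : ℂ) ≠ 0 := by simpa using hz'
  set t := Complex.arg (toComplex q) with ht
  have h1 : toComplex q / (‖toComplex q‖ : ℂ) = Complex.exp ((t : ℂ) * Complex.I) := by
    rw [div_eq_iff hn, mul_comm]; exact (Complex.norm_mul_exp_arg_mul_I _).symm
  have h2 : toComplex (star q) / (‖toComplex q‖ : ℂ) = Complex.exp (-((t : ℂ) * Complex.I)) := by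
    have := congrArg (starRingEnd ℂ) h1
    rw [map_div₀, Complex.conj_ofReal, ← Complex.exp_conj, map_mul, Complex.conj_ofReal,
      Complex.conj_I, mul_neg] at this
    rw [toComplex_star]; exact this
  have hI : toComplex auxI = Complex.I := by
    rw [toComplex_def]; simp [auxI]
  have hIk : Complex.I ^ k = 1 := by
    obtain ⟨c, rfl⟩ := h4
    rw [zpow_mul, show (Complex.I ^ (4 : ℤ)) = 1 by exact_mod_cast Complex.I_pow_four, one_zpow]
  have h3 : toComplex (auxZ q l (e, j)) / (‖toComplex (auxZ q l (e, j))‖ : ℂ)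
      = Complex.I ^ e * (Complex.exp ((t : ℂ) * Complex.I) ^ (l - j)
        * Complex.exp (-((t : ℂ) * Complex.I)) ^ j) := by
    rw [← h1, ← h2]
    have hst : ‖toComplex (star q)‖ = ‖toComplex q‖ := by
      rw [toComplex_star, Complex.norm_conj]
    simp only [auxZ, map_mul, map_pow, norm_mul, norm_pow, hI, Complex.norm_I, hst, one_pow,
      one_mul, Complex.ofReal_mul, Complex.ofReal_pow, div_pow]
    field_simp
  rw [h3, mul_zpow, ← zpow_natCast, ← zpow_mul, mul_comm (e : ℤ) k, zpow_mul, hIk, one_zpow,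
    one_mul, ← Complex.exp_nat_mul, ← Complex.exp_nat_mul, ← Complex.exp_add,
    ← Complex.exp_int_mul]
  congr 1
  push_cast [Nat.cast_sub hj]
  ring

open GaussianInt in
theorem aux_main (k : ℤ) (h4 : 4 ∣ k)
    (p : ℕ) (hp : p.Prime) (hp1 : p % 4 = 1) (q : GaussianInt) (hq : Zsqrtd.norm q = p) (l : ℕ) :
    latticeS (p ^ l) k = 4 * ∑ j ∈ Finset.range (l + 1),
          Complex.exp ((k : ℂ) * ((l : ℂ) - 2 * (j : ℂ)) *
            (Complex.arg (toComplex q) : ℂ) * Complex.I) := by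
  have hq0 : q ≠ 0 := (aux_irr q p hp hq).ne_zero
  have hs0 : star q ≠ 0 := by simpa using hq0
  unfold latticeS
  have key : ∑ x ∈ Finset.range 4 ×ˢ Finset.range (l + 1),
      Complex.exp ((k : ℂ) * ((l : ℂ) - 2 * (x.2 : ℂ)) *
            (Complex.arg (toComplex q) : ℂ) * Complex.I)
      = ∑ u ∈ latticeCircle (p ^ l),
        Complex.exp ((k : ℂ) * (latticeTheta u : ℂ) * Complex.I) := by
    refine Finset.sum_bij (fun x _ => ((auxZ q l x).re, (auxZ q l x).im)) ?_ ?_ ?_ ?_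
    · rintro ⟨e, j⟩ hx
      simp only [Finset.mem_product, Finset.mem_range] at hx
      rw [aux_mem, aux_norm q p hq l e j (by omega)]
      push_cast; rfl
    · rintro ⟨e, j⟩ hx ⟨e', j'⟩ hx' h
      simp only [Finset.mem_product, Finset.mem_range, Prod.mk.injEq] at hx hx' h
      have := aux_inj q p hp hp1 hq l e j e' j' (by omega) (by omega) hx.1 hx'.1
        (Zsqrtd.ext h.1 h.2)
      rw [this.1, this.2]
    · rintro ⟨x, y⟩ hu
      have := (aux_mem ⟨x, y⟩ (p ^ l)).1 hu
      push_cast at this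
      obtain ⟨e, he, j, hj, h⟩ := aux_surj q p hp hq l _ this
      refine ⟨(e, j), ?_, ?_⟩
      · simp only [Finset.mem_product, Finset.mem_range]; omega
      · simp only [← h]
    · rintro ⟨e, j⟩ hx
      simp only [Finset.mem_product, Finset.mem_range] at hx
      have h0 : auxZ q l (e, j) ≠ 0 := mul_ne_zero (aux_unitI e).ne_zero
        (mul_ne_zero (pow_ne_zero _ hq0) (pow_ne_zero _ hs0))
      simp only
      rw [aux_theta _ h0, aux_val q hq0 k h4 l e j (by omega)]
  rw [← key, Finset.sum_product]
  simp

/-- For `k ≠ 0` divisible by `4`, a prime `p ≡ 1 (mod 4)` written as `p = a² + b²`,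
and `θ_p = arg(a + ib)`: `|S(p^l, k)| = 4 |Σ_{j=0}^l exp(i k (l - 2j) θ_p)|` for all
`l ≥ 1`; in particular `|S(p, k)| = 8 |cos(k θ_p)|` and `|S(p^l, k)| ≤ 4 (l + 1)`. -/
theorem absS_prime_one_mod_four_pow (k : ℤ) (hk : k ≠ 0) (h4 : 4 ∣ k)
    (p : ℕ) (hp : p.Prime) (hp1 : p % 4 = 1) (a b : ℤ) (hab : (p : ℤ) = a ^ 2 + b ^ 2) :
    (∀ l : ℕ, 1 ≤ l →
      ‖latticeS (p ^ l) k‖ =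
        4 * ‖∑ j ∈ Finset.range (l + 1),
          Complex.exp ((k : ℂ) * ((l : ℂ) - 2 * (j : ℂ)) *
            (Complex.arg ((a : ℂ) + (b : ℂ) * Complex.I) : ℂ) * Complex.I)‖) ∧
    ‖latticeS p k‖ =
      8 * |Real.cos ((k : ℝ) * Complex.arg ((a : ℂ) + (b : ℂ) * Complex.I))| ∧
    (∀ l : ℕ, 1 ≤ l → ‖latticeS (p ^ l) k‖ ≤ 4 * ((l : ℝ) + 1)) := by
  have hq : Zsqrtd.norm (⟨a, b⟩ : GaussianInt) = p := by
    rw [Zsqrtd.norm_def, hab]; ring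
  have hc : GaussianInt.toComplex ⟨a, b⟩ = (a : ℂ) + (b : ℂ) * Complex.I := by
    rw [GaussianInt.toComplex_def]
  have main := aux_main k h4 p hp hp1 ⟨a, b⟩ hq
  rw [hc] at main
  set t := Complex.arg ((a : ℂ) + (b : ℂ) * Complex.I)
  refine ⟨fun l _ => ?_, ?_, fun l _ => ?_⟩
  · rw [main l, norm_mul]; simp
  · have h := main 1
    rw [pow_one] at h
    have h2 : latticeS p k = ((8 * Real.cos (k * t) : ℝ) : ℂ) := by
      rw [h, Finset.sum_range_succ, Finset.sum_range_one]
      push_cast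
      rw [Complex.cos, show (k : ℂ) * (1 - 2 * 0) * t * Complex.I = k * t * Complex.I by ring,
        show (k : ℂ) * (1 - 2 * 1) * t * Complex.I = -(k * t) * Complex.I by ring]
      ring
    rw [h2, Complex.norm_real, Real.norm_eq_abs, abs_mul]
    norm_num
  · rw [main l, norm_mul]
    have h1 : ‖(4 : ℂ)‖ = 4 := by simp
    rw [h1]
    gcongr
    refine (norm_sum_le_of_le _ (n := fun _ => (1 : ℝ)) fun j _ => ?_).trans ?_
    · rw [show (k : ℂ) * ((l : ℂ) - 2 * (j : ℂ)) * (t : ℂ) * Complex.I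
        = ((k * (l - 2 * j) * t : ℝ) : ℂ) * Complex.I by push_cast; ring,
        Complex.norm_exp_ofReal_mul_I]
    · simp
end

section
/- Let n ≥ 1 be an integer. If some prime q ≡ 3 (mod 4) divides n to an odd power, then r(n) = 0. Otherwise, r(n) = 4 · Π_{p | n, p prime, p ≡ 1 (mod 4)} (ν_p(n) + 1), where ν_p(n) is the multiplicity of p in n. In particular the number of representations of n as a sum of two integer squares does not depend on the power of 2 dividing n, nor on the (even) powers of primes congruent to 3 mod 4. -/
/-- Gaussian integers of norm `n`. -/
def gaussNormSet (n : ℕ) : Set GaussianInt := {z | z.norm = (n : ℤ)}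

theorem gauss_norm_def (z : GaussianInt) : z.norm = z.re ^ 2 + z.im ^ 2 := by
  rw [Zsqrtd.norm_def]; ring

theorem latticeR_eq_ncard (n : ℕ) : latticeR n = (gaussNormSet n).ncard := by
  unfold latticeR
  rw [← Set.ncard_coe_finset]
  symm
  refine Set.ncard_congr (fun z _ => (z.re, z.im)) ?_ ?_ ?_
  · intro z hz
    have h : z.re ^ 2 + z.im ^ 2 = (n : ℤ) := by rw [← gauss_norm_def]; exact hz
    simp only [latticeCircle, Finset.coe_filter, Finset.mem_product, Finset.mem_Icc,
      Set.mem_setOf_eq]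
    refine ⟨⟨⟨?_, ?_⟩, ?_, ?_⟩, h⟩ <;> nlinarith [sq_nonneg z.re, sq_nonneg z.im,
      Int.le_self_sq z.re, Int.le_self_sq z.im, Int.le_self_sq (-z.re), Int.le_self_sq (-z.im)]
  · intro a b _ _ h
    simp only [Prod.mk.injEq] at h
    exact Zsqrtd.ext h.1 h.2
  · rintro ⟨x, y⟩ h
    simp only [latticeCircle, Finset.coe_filter, Set.mem_setOf_eq] at h
    exact ⟨⟨x, y⟩, by
      show Zsqrtd.norm _ = _
      rw [gauss_norm_def]; exact h.2, rfl⟩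

theorem gauss_ncard_one : (gaussNormSet 1).ncard = 4 := by
  rw [← latticeR_eq_ncard]
  unfold latticeR latticeCircle
  decide

theorem gauss_ncard_mul (c : GaussianInt) (k m : ℕ) (hk : c.norm = (k : ℤ)) (h0 : k ≠ 0)
    (h : ∀ z ∈ gaussNormSet (k * m), c ∣ z) :
    (gaussNormSet (k * m)).ncard = (gaussNormSet m).ncard := by
  have hk0 : (k : ℤ) ≠ 0 := by exact_mod_cast h0
  have hc : c ≠ 0 := by
    rintro rfl
    simp at hk
    exact hk0 hk.symm
  symm
  refine Set.ncard_congr (fun z _ => c * z) ?_ ?_ ?_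
  · intro z hz
    have hz : z.norm = m := hz
    show Zsqrtd.norm _ = _
    rw [Zsqrtd.norm_mul, hk, hz]; push_cast; rfl
  · intro a b _ _ hab
    exact mul_left_cancel₀ hc hab
  · intro z hz
    obtain ⟨w, rfl⟩ := h z hz
    have hz : Zsqrtd.norm (c * w) = ((k * m : ℕ) : ℤ) := hz
    rw [Zsqrtd.norm_mul, hk] at hz
    push_cast at hz
    exact ⟨w, mul_left_cancel₀ hk0 hz, rfl⟩

theorem gauss_two_mul (m : ℕ) : (gaussNormSet (2 * m)).ncard = (gaussNormSet m).ncard := by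
  refine gauss_ncard_mul ⟨1, 1⟩ 2 m (by simp [Zsqrtd.norm_def]) (by norm_num) ?_
  intro z hz
  have hz : z.norm = ((2 * m : ℕ) : ℤ) := hz
  rw [gauss_norm_def] at hz
  push_cast at hz
  have h1 : Even (z.re + z.im) := by
    have : Even (z.re ^ 2 + z.im ^ 2) := by rw [hz]; exact even_two_mul _
    simpa [Int.even_add, Int.even_pow] using this
  obtain ⟨t, ht⟩ := h1
  refine ⟨⟨t, z.im - t⟩, ?_⟩
  ext
  · simp; linarith
  · simp

theorem gauss_two_pow_mul (k m : ℕ) :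
    (gaussNormSet (2 ^ k * m)).ncard = (gaussNormSet m).ncard := by
  induction k with
  | zero => simp
  | succ k ih => rw [pow_succ', mul_assoc, gauss_two_mul, ih]

theorem gauss_prime_dvd {c z : GaussianInt} (hc : Prime c) {n : ℕ} (hz : z.norm = n)
    (h : c ∣ (n : GaussianInt)) : c ∣ z ∨ star c ∣ z := by
  have h1 : (n : GaussianInt) = z * star z := by
    rw [← Zsqrtd.norm_eq_mul_conj, hz]; simp
  rw [h1] at h
  rcases hc.dvd_or_dvd h with h | h
  · exact Or.inl h
  · right
    obtain ⟨w, hw⟩ := h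
    refine ⟨star w, ?_⟩
    rw [← star_star z, hw, star_mul, mul_comm]

theorem gauss_three_mul (p m : ℕ) (hp : p.Prime) (h3 : p % 4 = 3) :
    (gaussNormSet (p ^ 2 * m)).ncard = (gaussNormSet m).ncard := by
  haveI := Fact.mk hp
  have hP := GaussianInt.prime_of_nat_prime_of_mod_four_eq_three p h3
  refine gauss_ncard_mul (p : GaussianInt) (p ^ 2) m ?_ (pow_ne_zero _ hp.ne_zero) ?_
  · rw [Zsqrtd.norm_natCast]; push_cast; ring
  · intro z hz
    rcases gauss_prime_dvd hP hz ⟨(p : GaussianInt) * m, by push_cast; ring⟩ with h | h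
    · exact h
    · simpa using h

theorem gauss_three_pow_mul (p k m : ℕ) (hp : p.Prime) (h3 : p % 4 = 3) :
    (gaussNormSet (p ^ (2 * k) * m)).ncard = (gaussNormSet m).ncard := by
  induction k with
  | zero => simp
  | succ k ih =>
    rw [show p ^ (2 * (k + 1)) * m = p ^ 2 * (p ^ (2 * k) * m) by ring, gauss_three_mul p _ hp h3, ih]

theorem gauss_prime_of_norm (c : GaussianInt) (p : ℕ) (hp : p.Prime) (hc : c.norm = p) :
    Prime c := by
  rw [← irreducible_iff_prime]
  refine ⟨?_, ?_⟩
  · intro hu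
    have := Zsqrtd.norm_eq_one_iff.2 hu
    rw [hc] at this
    exact hp.one_lt.ne' (by simpa using this)
  · intro a b hab
    have h : a.norm.natAbs * b.norm.natAbs = p := by
      rw [← Int.natAbs_mul, ← Zsqrtd.norm_mul, ← hab, hc]; simp
    have hi : Irreducible p := hp
    rcases hi.isUnit_or_isUnit h.symm with h | h
    · left; exact Zsqrtd.norm_eq_one_iff.1 (Nat.isUnit_iff.1 h)
    · right; exact Zsqrtd.norm_eq_one_iff.1 (Nat.isUnit_iff.1 h)

theorem gauss_norm_dvd {a b : GaussianInt} (h : a ∣ b) : a.norm ∣ b.norm := by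
  obtain ⟨c, rfl⟩ := h
  rw [Zsqrtd.norm_mul]
  exact dvd_mul_right _ _

theorem gauss_not_dvd_star (c : GaussianInt) (p : ℕ) (hp : p.Prime) (h1 : p % 4 = 1)
    (hc : c.norm = p) : ¬ c ∣ star c := by
  intro h
  have h2 : c ∣ ((2 * c.re : ℤ) : GaussianInt) := by
    have : ((2 * c.re : ℤ) : GaussianInt) = c + star c := by
      ext
      · simp; ring
      · simp
    rw [this]
    exact dvd_add dvd_rfl h
  have h3 := gauss_norm_dvd h2
  rw [hc, Zsqrtd.norm_intCast] at h3
  have hpZ : Prime (p : ℤ) := Nat.prime_iff_prime_int.1 hp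
  have h4 : (p : ℤ) ∣ 2 * c.re := by
    rcases hpZ.dvd_or_dvd h3 with h | h <;> exact h
  have h5 : (p : ℤ) ∣ c.re := by
    rcases hpZ.dvd_or_dvd h4 with h | h
    · exfalso
      have h : p ∣ 2 := by exact_mod_cast h
      rw [Nat.prime_dvd_prime_iff_eq hp Nat.prime_two] at h
      omega
    · exact h
  rw [gauss_norm_def] at hc
  have h6 : (p : ℤ) ∣ c.im := by
    have : (p : ℤ) ∣ c.im ^ 2 := by
      rw [← dvd_add_right (dvd_pow h5 two_ne_zero), hc]
    exact hpZ.dvd_of_dvd_pow this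
  have h7 : (p : ℤ) ^ 2 ∣ (p : ℤ) := by
    conv_rhs => rw [← hc]
    exact dvd_add (pow_dvd_pow_of_dvd h5 2) (pow_dvd_pow_of_dvd h6 2)
  have h8 : p ^ 2 ∣ p := by exact_mod_cast h7
  have h9 := Nat.le_of_dvd hp.pos h8
  nlinarith [hp.two_le]

theorem gauss_surj (c : GaussianInt) (p m : ℕ) (hp : p.Prime) (hc : c.norm = p) (k : ℕ) :
    ∀ z : GaussianInt, z.norm = ((p ^ k * m : ℕ) : ℤ) →
      ∃ j ≤ k, ∃ w : GaussianInt, w.norm = (m : ℤ) ∧ z = c ^ j * star c ^ (k - j) * w := by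
  have hP := gauss_prime_of_norm c p hp hc
  have hp0 : (p : ℤ) ≠ 0 := by exact_mod_cast hp.ne_zero
  have hcp : (p : GaussianInt) = c * star c := by
    rw [← Zsqrtd.norm_eq_mul_conj, hc]; simp
  induction k with
  | zero => intro z hz; exact ⟨0, le_rfl, z, by simpa using hz, by simp⟩
  | succ k ih =>
    intro z hz
    have hd : c ∣ ((p ^ (k + 1) * m : ℕ) : GaussianInt) :=
      ⟨star c * (p ^ k * m : GaussianInt), by push_cast; rw [pow_succ', hcp]; ring⟩
    rcases gauss_prime_dvd hP hz hd with ⟨y, rfl⟩ | ⟨y, rfl⟩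
    · rw [Zsqrtd.norm_mul, hc] at hz
      obtain ⟨j, hj, w, hw, rfl⟩ := ih y (mul_left_cancel₀ hp0 (by rw [hz]; push_cast; ring))
      refine ⟨j + 1, by omega, w, hw, ?_⟩
      rw [show k + 1 - (j + 1) = k - j by omega]; ring
    · rw [Zsqrtd.norm_mul, Zsqrtd.norm_conj, hc] at hz
      obtain ⟨j, hj, w, hw, rfl⟩ := ih y (mul_left_cancel₀ hp0 (by rw [hz]; push_cast; ring))
      refine ⟨j, by omega, w, hw, ?_⟩
      rw [show k + 1 - j = (k - j) + 1 by omega]; ring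

theorem gauss_inj_aux (c : GaussianInt) (p m : ℕ) (hp : p.Prime) (h1 : p % 4 = 1)
    (hm : ¬ p ∣ m) (hc : c.norm = p) (k j j' : ℕ) (hj' : j' ≤ k) (hlt : j < j')
    (w w' : GaussianInt) (hw : w.norm = m)
    (h : c ^ j * star c ^ (k - j) * w = c ^ j' * star c ^ (k - j') * w') : False := by
  have hP := gauss_prime_of_norm c p hp hc
  have h2 : star c ^ (k - j) * w = c ^ (j' - j) * star c ^ (k - j') * w' := by
    apply mul_left_cancel₀ (pow_ne_zero j hP.ne_zero)
    rw [← mul_assoc, h, ← mul_assoc, ← mul_assoc, ← pow_add]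
    congr 4; omega
  have h3 : c ∣ star c ^ (k - j) * w := by
    rw [h2, mul_assoc]
    exact Dvd.dvd.mul_right (dvd_pow_self c (by omega)) _
  rcases hP.dvd_or_dvd h3 with h | h
  · exact gauss_not_dvd_star c p hp h1 hc (hP.dvd_of_dvd_pow h)
  · have := gauss_norm_dvd h
    rw [hc, hw] at this
    exact hm (by exact_mod_cast this)

theorem gauss_one_pow_mul (p k m : ℕ) (hp : p.Prime) (h1 : p % 4 = 1) (hm : ¬ p ∣ m) :
    (gaussNormSet (p ^ k * m)).ncard = (k + 1) * (gaussNormSet m).ncard := by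
  haveI := Fact.mk hp
  obtain ⟨a, b, hab⟩ := Nat.Prime.sq_add_sq (p := p) (by omega)
  obtain ⟨c, hc⟩ : ∃ c : GaussianInt, c.norm = p :=
    ⟨⟨a, b⟩, by
      rw [gauss_norm_def]
      show (a : ℤ) ^ 2 + (b : ℤ) ^ 2 = p
      exact_mod_cast hab⟩
  have hP := gauss_prime_of_norm c p hp hc
  have hs0 : star c ≠ 0 := by simpa using hP.ne_zero
  have key : ((Set.Iic k) ×ˢ (gaussNormSet m)).ncard = (gaussNormSet (p ^ k * m)).ncard := by
    refine Set.ncard_congr (fun x _ => c ^ x.1 * star c ^ (k - x.1) * x.2) ?_ ?_ ?_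
    · rintro ⟨j, w⟩ ⟨hj, hw⟩
      have hj : j ≤ k := hj
      have hw : w.norm = m := hw
      have hpow : ∀ (d : GaussianInt) (l : ℕ), (d ^ l).norm = d.norm ^ l := fun d l =>
        map_pow (Zsqrtd.normMonoidHom (d := -1)) d l
      show Zsqrtd.norm _ = _
      rw [Zsqrtd.norm_mul, Zsqrtd.norm_mul, hpow, hpow, Zsqrtd.norm_conj, hc, ← pow_add, hw]
      push_cast
      congr 2
      omega
    · rintro ⟨j, w⟩ ⟨j', w'⟩ ⟨hj, hw⟩ ⟨hj', hw'⟩ h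
      simp only at h
      rcases lt_trichotomy j j' with hl | hl | hl
      · exact (gauss_inj_aux c p m hp h1 hm hc k j j' hj' hl w w' hw h).elim
      · subst hl
        rw [mul_left_cancel₀ (mul_ne_zero (pow_ne_zero _ hP.ne_zero) (pow_ne_zero _ hs0)) h]
      · exact (gauss_inj_aux c p m hp h1 hm hc k j' j hj hl w' w hw' h.symm).elim
    · intro z hz
      obtain ⟨j, hj, w, hw, rfl⟩ := gauss_surj c p m hp hc k z hz
      exact ⟨(j, w), ⟨hj, hw⟩, rfl⟩
  rw [← key, Set.ncard_prod]
  congr 1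
  rw [← Finset.coe_Iic, Set.ncard_coe_finset]; simp

theorem gauss_main (n : ℕ) (hn : 1 ≤ n) :
    (∀ q : ℕ, q.Prime → q % 4 = 3 → Even (n.factorization q)) →
      (gaussNormSet n).ncard = 4 * ∏ p ∈ n.primeFactors,
        if p % 4 = 1 then (n.factorization p + 1) else 1 := by
  induction n using Nat.recOnPrimePow with
  | zero => omega
  | one => intro _; simp [gauss_ncard_one]
  | prime_pow_mul a p k hp hpa hk ih =>
    intro hq
    have ha : a ≠ 0 := by rintro rfl; simp at hpa
    have hpk : p ^ k ≠ 0 := pow_ne_zero _ hp.ne_zero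
    have hf0 : a.factorization p = 0 := Nat.factorization_eq_zero_of_not_dvd hpa
    have hfp : (p ^ k * a).factorization p = k := by
      rw [Nat.factorization_mul hpk ha, hp.factorization_pow]; simp [hf0]
    have hfq : ∀ q, q ≠ p → (p ^ k * a).factorization q = a.factorization q := by
      intro q hqp
      rw [Nat.factorization_mul hpk ha, hp.factorization_pow]
      simp [Finsupp.single_apply, hqp.symm]
    have hpf : (p ^ k * a).primeFactors = insert p a.primeFactors := by
      rw [Nat.primeFactors_mul hpk ha, Nat.primeFactors_prime_pow hk.ne' hp]; rfl
    have hnot : p ∉ a.primeFactors := fun h => hpa (Nat.dvd_of_mem_primeFactors h)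
    have IH := ih (by omega) (by
      intro q hqp h3
      by_cases e : q = p
      · subst e; rw [hf0]; exact Even.zero
      · rw [← hfq q e]; exact hq q hqp h3)
    have hstep : (gaussNormSet (p ^ k * a)).ncard
        = (if p % 4 = 1 then k + 1 else 1) * (gaussNormSet a).ncard := by
      split_ifs with h1
      · exact gauss_one_pow_mul p k a hp h1 hpa
      · rw [one_mul]
        rcases hp.eq_two_or_odd with h2 | h2
        · subst h2; exact gauss_two_pow_mul k a
        · have h3 : p % 4 = 3 := by omega
          have he := hq p hp h3
          rw [hfp] at he
          obtain ⟨l, rfl⟩ := he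
          rw [← two_mul]
          exact gauss_three_pow_mul p l a hp h3
    rw [hstep, IH, hpf, Finset.prod_insert hnot, hfp]
    have : ∏ q ∈ a.primeFactors, (if q % 4 = 1 then (p ^ k * a).factorization q + 1 else 1)
        = ∏ q ∈ a.primeFactors, (if q % 4 = 1 then a.factorization q + 1 else 1) := by
      refine Finset.prod_congr rfl fun q hq => ?_
      rw [hfq q (fun e => hnot (e ▸ hq))]
    rw [this]; ring

theorem gauss_zero (n : ℕ) (hn : 1 ≤ n) (q : ℕ) (hq : q.Prime) (h3 : q % 4 = 3)
    (hodd : Odd (n.factorization q)) : latticeR n = 0 := by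
  unfold latticeR
  rw [Finset.card_eq_zero, Finset.eq_empty_iff_forall_notMem]
  rintro ⟨x, y⟩ hxy
  have h := (Finset.mem_filter.1 hxy).2
  simp only at h
  have h2 : n = x.natAbs ^ 2 + y.natAbs ^ 2 := by
    zify; simpa using h.symm
  have h4 := Nat.eq_sq_add_sq_iff.1 ⟨_, _, h2⟩ (q := q)
  have hmem : q ∈ n.primeFactors := by
    rw [← Nat.support_factorization, Finsupp.mem_support_iff]
    intro h0
    rw [h0] at hodd
    simp at hodd
  have h5 := h4 hmem h3
  rw [← Nat.factorization_def n hq] at h5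
  exact (Nat.not_even_iff_odd.2 hodd) h5

/-- If some prime `q ≡ 3 (mod 4)` divides `n` to an odd power then `r(n) = 0`;
otherwise `r(n) = 4 Π_{p ∣ n, p ≡ 1 (mod 4)} (ν_p(n) + 1)`. -/
theorem latticeR_formula (n : ℕ) (hn : 1 ≤ n) :
    ((∃ q : ℕ, q.Prime ∧ q % 4 = 3 ∧ Odd (n.factorization q)) → latticeR n = 0) ∧
    (¬ (∃ q : ℕ, q.Prime ∧ q % 4 = 3 ∧ Odd (n.factorization q)) →
      latticeR n = 4 * ∏ p ∈ n.primeFactors.filter (fun p => p % 4 = 1),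
        (n.factorization p + 1)) := by
  refine ⟨?_, ?_⟩
  · rintro ⟨q, hq, h3, hodd⟩
    exact gauss_zero n hn q hq h3 hodd
  · intro h
    rw [latticeR_eq_ncard, Finset.prod_filter]
    refine gauss_main n hn fun q hq h3 => ?_
    by_contra he
    exact h ⟨q, hq, h3, Nat.not_even_iff_odd.1 he⟩
end
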